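/- arXiv:1702.05503 — 5 statements merged into one kernel-verified Lean document; each statement's English description precedes it below -/
import Mathlib

section
/- There exists a constant c > 0, depending only on n, d, and C₀, with the following property: for every Λ ≥ 1, every r > 0, and all points x₁, x₂ ∈ Ω with dist(x₁,Γ) ≥ r, dist(x₂,Γ) ≥ r and |x₁ − x₂| ≤ Λ r, there exist points y₁ ∈ B(x₁, r/3) and y₂ ∈ B(x₂, r/3) such that dist([y₁,y₂], Γ) ≥ c Λ^{−d/(n−d−1)} r, where [y₁,y₂] denotes the closed line segment joining y₁ to y₂. (Existence of thick Harnack tubes.) -/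
open MeasureTheory Metric Set Filter
open scoped ENNReal NNReal Topology

noncomputable section

/-- Euclidean space `ℝⁿ`. -/
abbrev Euc (n : ℕ) := EuclideanSpace ℝ (Fin n)

/-- `Γ ⊆ ℝⁿ` is `d`-Ahlfors regular with constant `C₀`. -/
def AhlforsRegular (n : ℕ) (d C₀ : ℝ) (Γ : Set (Euc n)) : Prop :=
  ∀ x ∈ Γ, ∀ r : ℝ, 0 < r →
    ENNReal.ofReal (C₀⁻¹ * r ^ d) ≤ μH[d] (Γ ∩ ball x r) ∧
      μH[d] (Γ ∩ ball x r) ≤ ENNReal.ofReal (C₀ * r ^ d)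

/-- The weight `w(x) = dist(x, Γ) ^ (d + 1 - n)`. -/
def weightW (n : ℕ) (d : ℝ) (Γ : Set (Euc n)) (x : Euc n) : ℝ :=
  infDist x Γ ^ (d + 1 - (n : ℝ))

/-- The measure `m` with density `w` with respect to Lebesgue measure. -/
def measW (n : ℕ) (d : ℝ) (Γ : Set (Euc n)) : Measure (Euc n) :=
  volume.withDensity fun x => ENNReal.ofReal (weightW n d Γ x)

/-- `v` is a distributional gradient of `u` on the open set `E`: for every smooth
compactly supported test function `φ` with support in `E`, `∫_E u ∇φ = -∫_E φ v`. -/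
def IsDistribGradOn {n : ℕ} (u : Euc n → ℝ) (v : Euc n → Euc n) (E : Set (Euc n)) : Prop :=
  ∀ φ : Euc n → ℝ, ContDiff ℝ (⊤ : ℕ∞) φ → HasCompactSupport φ → tsupport φ ⊆ E →
    ∫ x in E, u x • gradient φ x = -∫ x in E, φ x • v x

/-- The averages of `u` over small balls centered at `x` converge to `t`. -/
def HasTraceAt {n : ℕ} (u : Euc n → ℝ) (x : Euc n) (t : ℝ) : Prop :=
  Tendsto (fun ρ : ℝ => ⨍ y in ball x ρ, u y) (𝓝[>] (0 : ℝ)) (𝓝 t)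

/-- `u` belongs to the weighted Sobolev space `W = Ẇ^{1,2}_w(Ω)`, `Ω = Γᶜ`, with
distributional gradient `v` on `Ω` lying in `L²(Ω, m)`. -/
structure MemW (n : ℕ) (d : ℝ) (Γ : Set (Euc n)) (u : Euc n → ℝ) (v : Euc n → Euc n) :
    Prop where
  locInt : LocallyIntegrableOn u Γᶜ volume
  gradLocInt : LocallyIntegrableOn v Γᶜ volume
  isGrad : IsDistribGradOn u v Γᶜ
  l2 : ∫⁻ x in Γᶜ, ENNReal.ofReal (‖v x‖ ^ 2) ∂(measW n d Γ) < ⊤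

/-- `u` belongs to the local space `W_r(E)`: `u ∈ L¹_loc(E)` and `φ u` (extended by `0`)
belongs to `W` for every smooth compactly supported `φ` with support in `E`. -/
def MemWrOn (n : ℕ) (d : ℝ) (Γ : Set (Euc n)) (E : Set (Euc n)) (u : Euc n → ℝ) : Prop :=
  LocallyIntegrableOn u E volume ∧
    ∀ φ : Euc n → ℝ, ContDiff ℝ (⊤ : ℕ∞) φ → HasCompactSupport φ → tsupport φ ⊆ E →
      ∃ vφ : Euc n → Euc n, MemW n d Γ (fun x => φ x * u x) vφ

/-- Degenerate ellipticity and boundedness conditions for the matrix `A`. -/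
def EllipticOn (n : ℕ) (d : ℝ) (Γ : Set (Euc n)) (A : Euc n → Euc n →L[ℝ] Euc n)
    (C₁ : ℝ) : Prop :=
  ∀ x, x ∉ Γ →
    (∀ ξ ζ : Euc n, |∑ i, A x ξ i * ζ i| ≤ C₁ * weightW n d Γ x * ‖ξ‖ * ‖ζ‖) ∧
      ∀ ξ : Euc n, C₁⁻¹ * weightW n d Γ x * ‖ξ‖ ^ 2 ≤ ∑ i, A x ξ i * ξ i

/-- `u`, with gradient `v`, is a weak subsolution of `- div A ∇u = 0` on `U ⊆ Ω = Γᶜ`. -/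
def SubsolOn {n : ℕ} (Γ : Set (Euc n)) (A : Euc n → Euc n →L[ℝ] Euc n)
    (v : Euc n → Euc n) (U : Set (Euc n)) : Prop :=
  ∀ φ : Euc n → ℝ, ContDiff ℝ (⊤ : ℕ∞) φ → HasCompactSupport φ → tsupport φ ⊆ U →
    (∀ x, 0 ≤ φ x) → ∫ x in Γᶜ, ∑ i, A x (v x) i * gradient φ x i ≤ 0

/-- `u`, with gradient `v`, is a weak supersolution of `- div A ∇u = 0` on `U ⊆ Ω = Γᶜ`. -/
def SupersolOn {n : ℕ} (Γ : Set (Euc n)) (A : Euc n → Euc n →L[ℝ] Euc n)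
    (v : Euc n → Euc n) (U : Set (Euc n)) : Prop :=
  ∀ φ : Euc n → ℝ, ContDiff ℝ (⊤ : ℕ∞) φ → HasCompactSupport φ → tsupport φ ⊆ U →
    (∀ x, 0 ≤ φ x) → 0 ≤ ∫ x in Γᶜ, ∑ i, A x (v x) i * gradient φ x i

/-- `u`, with gradient `v`, is a weak solution of `- div A ∇u = 0` on `U ⊆ Ω = Γᶜ`. -/
def SolOn {n : ℕ} (Γ : Set (Euc n)) (A : Euc n → Euc n →L[ℝ] Euc n)
    (v : Euc n → Euc n) (U : Set (Euc n)) : Prop :=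
  ∀ φ : Euc n → ℝ, ContDiff ℝ (⊤ : ℕ∞) φ → HasCompactSupport φ → tsupport φ ⊆ U →
    ∫ x in Γᶜ, ∑ i, A x (v x) i * gradient φ x i = 0

lemma exists_hyper (m : ℕ) (w : Euc (m + 1)) :
    ∃ P : Submodule ℝ (Euc (m + 1)), Module.finrank ℝ P = m ∧ w ∈ Pᗮ := by
  have : Fact (Module.finrank ℝ (Euc (m + 1)) = m + 1) := ⟨by simp⟩
  have key : ∀ e : Euc (m + 1), e ≠ 0 → w ∈ Submodule.span ℝ {e} →
      ∃ P : Submodule ℝ (Euc (m + 1)), Module.finrank ℝ P = m ∧ w ∈ Pᗮ := by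
    intro e he hw
    refine ⟨(Submodule.span ℝ {e})ᗮ, Submodule.finrank_orthogonal_span_singleton he, ?_⟩
    rw [Submodule.orthogonal_orthogonal]
    exact hw
  by_cases hw : w = 0
  · obtain ⟨e, he⟩ := exists_ne (0 : Euc (m + 1))
    exact key e he (by simp [hw])
  · exact key w hw (Submodule.mem_span_singleton_self w)

lemma tube_ineq (m : ℕ) (hm : 1 ≤ m) (d C₀ : ℝ) (hC₀ : 1 ≤ C₀)
    (Γ : Set (Euc (m + 1))) (hne : Γ.Nonempty) (hcl : IsClosed Γ)
    (hA : AhlforsRegular (m + 1) d C₀ Γ) (Λ : ℝ) (hΛ : 1 ≤ Λ) (r : ℝ) (hr : 0 < r)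
    (x₁ x₂ : Euc (m + 1)) (hx : dist x₁ x₂ ≤ Λ * r) (δ : ℝ) (hδ : 0 < δ) (hδr : δ ≤ r / 10)
    (hcon : ¬ ∃ y₁ ∈ ball x₁ (r / 3), ∃ y₂ ∈ ball x₂ (r / 3),
      ∀ z ∈ segment ℝ y₁ y₂, δ ≤ infDist z Γ) :
    (r / 3) ^ m * (C₀⁻¹ * δ ^ d) ≤ (C₀ * (3 * Λ * r) ^ d) * (6 * δ) ^ m := by
  obtain ⟨P, hP, hw⟩ := exists_hyper m (x₂ - x₁)
  have hC0 : 0 < C₀ := by linarith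
  have : Nontrivial P := Module.nontrivial_of_finrank_pos (R := ℝ) (by omega)
  have hπ0 : P.orthogonalProjectionOnto (x₂ - x₁) = 0 :=
    Submodule.orthogonalProjectionOnto_eq_zero_iff.mpr hw
  -- bad points
  have hbad : ∀ v : P, ‖v‖ < r / 3 → ∃ γ ∈ Γ, ∃ t ∈ Icc (0 : ℝ) 1,
      dist (x₁ + t • (x₂ - x₁) + (v : Euc (m + 1))) γ < δ := by
    intro v hv
    by_contra hno
    push Not at hno
    apply hcon
    refine ⟨x₁ + v, by simpa [mem_ball, dist_eq_norm] using hv,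
      x₂ + v, by simpa [mem_ball, dist_eq_norm] using hv, ?_⟩
    intro z hz
    rw [segment_eq_image'] at hz
    obtain ⟨t, ht, rfl⟩ := hz
    rw [le_infDist hne]
    intro γ hγ
    have := hno γ hγ t ht
    have e : x₁ + (v : Euc (m + 1)) + t • (x₂ + (v : Euc (m + 1)) - (x₁ + v)) =
        x₁ + t • (x₂ - x₁) + (v : Euc (m + 1)) := by
      rw [add_sub_add_right_eq_sub]; abel
    rw [← e] at this
    exact this
  set T : Set (Euc (m + 1)) := {γ | γ ∈ Γ ∧ ∃ v : P, ‖v‖ < r / 3 ∧ ∃ t ∈ Icc (0 : ℝ) 1,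
      dist (x₁ + t • (x₂ - x₁) + (v : Euc (m + 1))) γ < δ} with hT
  have hTd : ∀ γ ∈ T, ∀ γ' ∈ T, dist γ γ' ≤ 2 * Λ * r := by
    rintro γ ⟨-, v, hv, t, ht, h⟩ γ' ⟨-, v', hv', t', ht', h'⟩
    have h1 : dist (x₁ + t • (x₂ - x₁) + (v : Euc (m + 1)))
        (x₁ + t' • (x₂ - x₁) + (v' : Euc (m + 1))) ≤ Λ * r + (r / 3 + r / 3) := by
      have e : (x₁ + t • (x₂ - x₁) + (v : Euc (m + 1))) -
        (x₁ + t' • (x₂ - x₁) + (v' : Euc (m + 1))) =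
          (t - t') • (x₂ - x₁) + ((v : Euc (m + 1)) - v') := by
        rw [sub_smul]; abel
      rw [dist_eq_norm, e]
      refine (norm_add_le _ _).trans (add_le_add ?_ ?_)
      · rw [norm_smul, ← dist_eq_norm x₂ x₁, dist_comm x₂ x₁]
        have : ‖t - t'‖ ≤ 1 := by
          rw [Real.norm_eq_abs, abs_le]
          constructor <;> linarith [ht.1, ht.2, ht'.1, ht'.2]
        calc ‖t - t'‖ * dist x₁ x₂ ≤ 1 * dist x₁ x₂ := by gcongr
          _ ≤ Λ * r := by linarith
      · refine (norm_sub_le _ _).trans (add_le_add ?_ ?_)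
        · exact hv.le
        · exact hv'.le
    have h2 := dist_triangle4 γ (x₁ + t • (x₂ - x₁) + (v : Euc (m + 1)))
      (x₁ + t' • (x₂ - x₁) + (v' : Euc (m + 1))) γ'
    rw [dist_comm γ (x₁ + t • (x₂ - x₁) + (v : Euc (m + 1)))] at h2
    nlinarith
  obtain ⟨γ₀, hγ₀⟩ : T.Nonempty := by
    obtain ⟨γ, hγ, t, ht, h⟩ := hbad 0 (by simp; exact hr)
    exact ⟨γ, hγ, 0, by simp; exact hr, t, ht, h⟩
  obtain ⟨u, huT, hudis, hucov⟩ :=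
    Vitali.exists_disjoint_subfamily_covering_enlargement_closedBall T (fun x => x)
      (fun _ => δ) δ (fun _ _ => le_rfl) 5 (by norm_num)
  have hudis' : u.PairwiseDisjoint fun a => ball a δ :=
    hudis.mono fun a => ball_subset_closedBall
  have hucount : u.Countable :=
    hudis'.countable_of_isOpen (fun _ _ => isOpen_ball) (fun a _ => ⟨a, mem_ball_self hδ⟩)
  -- measure bound
  have hM : (∑' _ : u, ENNReal.ofReal (C₀⁻¹ * δ ^ d)) ≤
      ENNReal.ofReal (C₀ * (3 * Λ * r) ^ d) := by
    calc (∑' _ : u, ENNReal.ofReal (C₀⁻¹ * δ ^ d))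
        ≤ ∑' a : u, μH[d] (Γ ∩ ball (a : Euc (m + 1)) δ) :=
          ENNReal.tsum_le_tsum fun a => (hA a (huT a.2).1 δ hδ).1
      _ ≤ μH[d] (⋃ a : u, Γ ∩ ball (a : Euc (m + 1)) δ) := by
          apply tsum_meas_le_meas_iUnion_of_disjoint
          · exact fun a => hcl.measurableSet.inter measurableSet_ball
          · intro a b hab
            exact (hudis' a.2 b.2 (fun h => hab (Subtype.ext h))).mono
              inter_subset_right inter_subset_right
      _ ≤ μH[d] (Γ ∩ ball γ₀ (3 * Λ * r)) := by
          apply measure_mono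
          refine iUnion_subset fun a => inter_subset_inter_right _ ?_
          apply ball_subset_ball'
          have := hTd a (huT a.2) γ₀ hγ₀
          nlinarith
      _ ≤ _ := (hA γ₀ hγ₀.1 _ (by positivity)).2
  have hcov : ball (0 : P) (r / 3) ⊆
      ⋃ a ∈ u, ball (P.orthogonalProjectionOnto (a - x₁)) (6 * δ) := by
    intro v hv
    have hv : ‖v‖ < r / 3 := by simpa using hv
    obtain ⟨γ, hγ, t, ht, h⟩ := hbad v hv
    obtain ⟨b, hb, hsub⟩ := hucov γ ⟨hγ, v, hv, t, ht, h⟩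
    have hb5 : dist γ b ≤ 5 * δ := hsub (mem_closedBall_self hδ.le)
    refine mem_biUnion hb ?_
    rw [mem_ball, dist_eq_norm]
    have e : v - P.orthogonalProjectionOnto (b - x₁) =
        P.orthogonalProjectionOnto ((x₁ + t • (x₂ - x₁) + (v : Euc (m + 1))) - b) := by
      have : (x₁ + t • (x₂ - x₁) + (v : Euc (m + 1))) - b =
        t • (x₂ - x₁) + (v : Euc (m + 1)) - (b - x₁) := by abel
      rw [this, map_sub _ (t • (x₂ - x₁) + (v : Euc (m + 1))), map_add, map_smul, hπ0,
        Submodule.orthogonalProjectionOnto_mem_subspace_eq_self]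
      simp
    rw [e]
    refine (P.norm_orthogonalProjectionOnto_apply_le _).trans_lt ?_
    rw [← dist_eq_norm]
    linarith [dist_triangle (x₁ + t • (x₂ - x₁) + (v : Euc (m + 1))) γ b]
  set ν : Measure P := volume
  have hV : ENNReal.ofReal ((r / 3) ^ m) * ν (ball 0 1) ≤
      (∑' _ : u, ENNReal.ofReal ((6 * δ) ^ m)) * ν (ball 0 1) := by
    calc ENNReal.ofReal ((r / 3) ^ m) * ν (ball 0 1) = ν (ball 0 (r / 3)) := by
          rw [Measure.addHaar_ball ν _ (by positivity : 0 ≤ r / 3), hP]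
      _ ≤ ν (⋃ a ∈ u, ball (P.orthogonalProjectionOnto (a - x₁)) (6 * δ)) := measure_mono hcov
      _ ≤ ∑' a : u, ν (ball (P.orthogonalProjectionOnto (a - x₁)) (6 * δ)) :=
          measure_biUnion_le _ hucount _
      _ = ∑' _ : u, ENNReal.ofReal ((6 * δ) ^ m) * ν (ball 0 1) := by
          congr 1
          ext a
          rw [Measure.addHaar_ball ν _ (by positivity : 0 ≤ 6 * δ), hP]
      _ = _ := ENNReal.tsum_mul_right
  have hV' := (ENNReal.mul_le_mul_iff_left (measure_ball_pos ν 0 one_pos).ne'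
    measure_ball_lt_top.ne).1 hV
  rw [ENNReal.tsum_const] at hV' hM
  have hfin : ENNReal.ofReal ((r / 3) ^ m) * ENNReal.ofReal (C₀⁻¹ * δ ^ d) ≤
      ENNReal.ofReal (C₀ * (3 * Λ * r) ^ d) * ENNReal.ofReal ((6 * δ) ^ m) := by
    calc _ ≤ (ENat.card u * ENNReal.ofReal ((6 * δ) ^ m)) * ENNReal.ofReal (C₀⁻¹ * δ ^ d) := by
          gcongr
      _ = (ENat.card u * ENNReal.ofReal (C₀⁻¹ * δ ^ d)) * ENNReal.ofReal ((6 * δ) ^ m) := by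
          ring
      _ ≤ _ := by gcongr
  rw [← ENNReal.ofReal_mul (by positivity), ← ENNReal.ofReal_mul (by positivity)] at hfin
  exact (ENNReal.ofReal_le_ofReal_iff (by positivity)).1 hfin

lemma scale_ineq (m : ℕ) (d C₀ c Λ r s : ℝ) (hs : s = (m : ℝ) - d) (hs0 : 0 < s)
    (hC₀ : 0 < C₀) (hc : 0 < c) (hΛ : 0 < Λ) (hr : 0 < r)
    (h : (r / 3) ^ m * (C₀⁻¹ * (c * Λ ^ (-(d / s)) * r) ^ d) ≤
      (C₀ * (3 * Λ * r) ^ d) * (6 * (c * Λ ^ (-(d / s)) * r)) ^ m) :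
    1 ≤ C₀ ^ 2 * 3 ^ d * 18 ^ m * c ^ s := by
  set L := Λ ^ (-(d / s)) with hL
  have hL0 : 0 < L := Real.rpow_pos_of_pos hΛ _
  have hLs : L ^ s = Λ ^ (-d) := by
    rw [hL, ← Real.rpow_mul hΛ.le]
    congr 1
    field_simp
  have hcL : (c * L) ^ m = (c * L) ^ d * (c ^ s * Λ ^ (-d)) := by
    rw [← Real.rpow_natCast, ← hLs, ← Real.mul_rpow hc.le hL0.le,
      ← Real.rpow_add (by positivity)]
    congr 1
    rw [hs]; ring
  have e1 : (3 * Λ * r) ^ d = 3 ^ d * Λ ^ d * r ^ d := by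
    rw [Real.mul_rpow (by positivity) hr.le, Real.mul_rpow (by norm_num) hΛ.le]
  have e2 : (c * L * r) ^ d = (c * L) ^ d * r ^ d := Real.mul_rpow (by positivity) hr.le
  have e3 : (6 * (c * L * r)) ^ m = 6 ^ m * r ^ m * ((c * L) ^ d * (c ^ s * Λ ^ (-d))) := by
    rw [← hcL]; simp only [mul_pow]; ring
  rw [e1, e2, e3, Real.rpow_neg hΛ.le, div_pow] at h
  have hX : 0 < (c * L) ^ d := by positivity
  have hY : 0 < r ^ d := by positivity
  have hZ : 0 < Λ ^ d := by positivity
  have hW : 0 < r ^ m := by positivity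
  have e18 : (18 : ℝ) ^ m = 3 ^ m * 6 ^ m := by rw [← mul_pow]; norm_num
  rw [e18]
  generalize (c * L) ^ d = X at *
  generalize r ^ d = Y at *
  generalize Λ ^ d = Z at *
  generalize r ^ m = W at *
  have hq : 0 < (3 : ℝ) ^ m := by positivity
  have hk : 0 < W * X * Y / (3 ^ m * C₀) := by positivity
  refine le_of_mul_le_mul_left ?_ hk
  calc W * X * Y / (3 ^ m * C₀) * 1 = W / 3 ^ m * (C₀⁻¹ * (X * Y)) := by field_simp
    _ ≤ _ := h
    _ = _ := by field_simp

/-- existence of thick tubes (Harnack chains) joining interior points. -/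
theorem statement0 (n : ℕ) (hn : 2 ≤ n) (d C₀ : ℝ) (hd0 : 0 < d)
    (hdn : d < (n : ℝ) - 1) (hC₀ : 1 ≤ C₀) :
    ∃ c : ℝ, 0 < c ∧
      ∀ Γ : Set (Euc n), Γ.Nonempty → IsClosed Γ → AhlforsRegular n d C₀ Γ →
        ∀ Λ : ℝ, 1 ≤ Λ → ∀ r : ℝ, 0 < r → ∀ x₁ x₂ : Euc n,
          x₁ ∉ Γ → x₂ ∉ Γ → r ≤ infDist x₁ Γ → r ≤ infDist x₂ Γ → dist x₁ x₂ ≤ Λ * r →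
          ∃ y₁ ∈ ball x₁ (r / 3), ∃ y₂ ∈ ball x₂ (r / 3),
            ∀ z ∈ segment ℝ y₁ y₂,
              c * Λ ^ (-(d / ((n : ℝ) - d - 1))) * r ≤ infDist z Γ := by
  obtain ⟨m, rfl⟩ : ∃ m, n = m + 1 := ⟨n - 1, by omega⟩
  have hC0 : 0 < C₀ := by linarith
  have hs0 : 0 < (m : ℝ) - d := by push_cast at hdn; linarith
  have hes : ((m + 1 : ℕ) : ℝ) - d - 1 = (m : ℝ) - d := by push_cast; ring
  rw [hes]
  set K : ℝ := C₀ ^ 2 * 3 ^ d * 18 ^ m with hK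
  have hK0 : 0 < K := by positivity
  have h2 : 0 < (1 / (2 * K)) ^ (1 / ((m : ℝ) - d)) := by positivity
  refine ⟨min (1 / 10) ((1 / (2 * K)) ^ (1 / ((m : ℝ) - d))), lt_min (by norm_num) h2, ?_⟩
  set c := min (1 / 10) ((1 / (2 * K)) ^ (1 / ((m : ℝ) - d))) with hc
  have hc0 : 0 < c := lt_min (by norm_num) h2
  intro Γ hne hcl hA Λ hΛ r hr x₁ x₂ _ _ _ _ hx
  by_contra hcon
  have hL0 : 0 < Λ ^ (-(d / ((m : ℝ) - d))) := Real.rpow_pos_of_pos (by linarith) _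
  have hL1 : Λ ^ (-(d / ((m : ℝ) - d))) ≤ 1 :=
    Real.rpow_le_one_of_one_le_of_nonpos hΛ (by rw [neg_nonpos]; positivity)
  have hδr : c * Λ ^ (-(d / ((m : ℝ) - d))) * r ≤ r / 10 := by
    have h10 : c ≤ 1 / 10 := min_le_left _ _
    have : c * Λ ^ (-(d / ((m : ℝ) - d))) ≤ 1 / 10 * 1 := by gcongr
    nlinarith
  have h := tube_ineq m (by omega) d C₀ hC₀ Γ hne hcl hA Λ hΛ r hr x₁ x₂ hx _
    (by positivity) hδr hcon
  have h1 := scale_ineq m d C₀ c Λ r _ rfl hs0 hC0 hc0 (by linarith) hr h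
  have h3 : c ^ ((m : ℝ) - d) ≤ 1 / (2 * K) := by
    calc c ^ ((m : ℝ) - d) ≤ ((1 / (2 * K)) ^ (1 / ((m : ℝ) - d))) ^ ((m : ℝ) - d) :=
          Real.rpow_le_rpow hc0.le (min_le_right _ _) hs0.le
      _ = 1 / (2 * K) := by
          rw [← Real.rpow_mul (by positivity), one_div_mul_cancel hs0.ne', Real.rpow_one]
  have h4 : K * c ^ ((m : ℝ) - d) ≤ K * (1 / (2 * K)) := by gcongr
  have h5 : K * (1 / (2 * K)) = 1 / 2 := by field_simp
  linarith
end
end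

section
/- There exists a constant C ≥ 1, depending only on n, d, and C₀, such that for every x ∈ ℝⁿ and r > 0: (i) if δ(x) ≥ 2r, then C⁻¹ rⁿ w(x) ≤ m(B(x,r)) ≤ C rⁿ w(x); (ii) if δ(x) ≤ 2r, then C⁻¹ r^{d+1} ≤ m(B(x,r)) ≤ C r^{d+1}. -/
open MeasureTheory Metric Set Filter
open scoped ENNReal NNReal Topology

noncomputable section

lemma aux_vol_ball (n : ℕ) (hn : 2 ≤ n) (x : Euc n) (r : ℝ) (hr : 0 < r) :
    volume (ball x r) = ENNReal.ofReal (r ^ (n : ℝ) * volume.real (ball (0 : Euc n) 1)) := by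
  rw [Measure.addHaar_ball_of_pos volume x hr, ENNReal.ofReal_mul (by positivity)]
  simp [measureReal_def, ENNReal.ofReal_toReal (measure_ball_lt_top).ne]

lemma aux_vol_pos (n : ℕ) : 0 < volume.real (ball (0 : Euc n) 1) := by
  rw [measureReal_def]
  exact ENNReal.toReal_pos (measure_ball_pos volume _ one_pos).ne' (measure_ball_lt_top).ne

lemma aux_kernel (n : ℕ) (hn : 2 ≤ n) (z : Euc n) (R : ℝ) (hR : 0 < R) :
    ∫⁻ y in ball z R, ENNReal.ofReal ((dist y z ^ (n - 1))⁻¹) =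
      ENNReal.ofReal (n * volume.real (ball (0 : Euc n) 1) * R) := by
  haveI : Nonempty (Fin n) := ⟨⟨0, by omega⟩⟩
  set f : ℝ → ℝ := (Iio R).indicator (fun t => (t ^ (n - 1))⁻¹) with hf
  have h1 : ∫⁻ y in ball z R, ENNReal.ofReal ((dist y z ^ (n - 1))⁻¹) =
      ∫⁻ y : Euc n, ENNReal.ofReal (f ‖y‖) := by
    rw [← lintegral_indicator measurableSet_ball,
      ← lintegral_sub_right_eq_self (fun y : Euc n => ENNReal.ofReal (f ‖y‖)) z]
    congr 1
    ext y
    by_cases h : dist y z < R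
    · have h' : ‖y - z‖ < R := by rwa [← dist_eq_norm]
      simp [hf, indicator, h, h', dist_eq_norm]
    · have h' : ¬ ‖y - z‖ < R := by rwa [← dist_eq_norm]
      simp [hf, indicator, h, h']
  have key : EqOn (fun y : ℝ => y ^ (Module.finrank ℝ (Euc n) - 1) • f y)
      ((Iio R).indicator (fun _ => (1 : ℝ))) (Ioi 0) := by
    intro t ht
    have ht' : (0 : ℝ) < t := ht
    by_cases h : t < R
    · simp [hf, indicator, h, ht'.ne']
    · simp [hf, indicator, h]
  have hint : Integrable (fun y : Euc n => f ‖y‖) volume := by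
    rw [integrable_fun_norm_addHaar volume, integrableOn_congr_fun key measurableSet_Ioi,
      integrableOn_indicator_iff measurableSet_Iio]
    refine (integrableOn_const_iff (by simp)).2 (Or.inr ?_)
    rw [show Iio R ∩ Ioi (0:ℝ) = Ioo 0 R by ext; simp [and_comm]]
    simp
  have hnn : ∀ y : Euc n, 0 ≤ f ‖y‖ := fun y => by
    rw [hf, indicator]
    split_ifs <;> positivity
  rw [h1, ← ofReal_integral_eq_lintegral_ofReal hint (Eventually.of_forall hnn),
    integral_fun_norm_addHaar, setIntegral_congr_fun measurableSet_Ioi key,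
    setIntegral_indicator measurableSet_Iio,
    show Ioi (0:ℝ) ∩ Iio R = Ioo 0 R by ext; simp]
  simp [hR.le, mul_assoc]

lemma aux_meas (n : ℕ) (d : ℝ) (Γ : Set (Euc n)) :
    Measurable fun x => ENNReal.ofReal (weightW n d Γ x) := by
  unfold weightW
  have := (continuous_infDist_pt Γ).measurable
  fun_prop

lemma aux_measW (n : ℕ) (d : ℝ) (Γ : Set (Euc n)) (x : Euc n) (r : ℝ) :
    measW n d Γ (ball x r) = ∫⁻ y in ball x r, ENNReal.ofReal (weightW n d Γ y) := by
  rw [measW, withDensity_apply _ measurableSet_ball]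

lemma aux_null (n : ℕ) (d C₀ : ℝ) (hdn : d < (n : ℝ) - 1) (Γ : Set (Euc n))
    (hne : Γ.Nonempty) (hA : AhlforsRegular n d C₀ Γ) : volume Γ = 0 := by
  obtain ⟨z, hz⟩ := hne
  have hU : Γ = ⋃ k : ℕ, Γ ∩ ball z ((k : ℝ) + 1) := by
    rw [← inter_iUnion]
    refine (inter_eq_left.2 fun y _ => ?_).symm
    obtain ⟨k, hk⟩ := exists_nat_gt (dist y z)
    exact mem_iUnion.2 ⟨k, by simp only [mem_ball]; linarith⟩
  rw [hU, measure_iUnion_null_iff]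
  intro k
  have h0 : μH[(n : ℝ)] (Γ ∩ ball z ((k : ℝ) + 1)) = 0 := by
    rcases Measure.hausdorffMeasure_zero_or_top (d₁ := d) (d₂ := n) (by linarith)
      (Γ ∩ ball z ((k : ℝ) + 1)) with h | h
    · exact h
    · have := (hA z hz (k + 1) (by positivity)).2
      rw [h] at this
      exact absurd this (by simp)
  haveI : (μH[(n : ℝ)] : Measure (Euc n)).IsAddHaarMeasure := by
    simpa using isAddHaarMeasure_hausdorffMeasure (E := Euc n)
  exact (Measure.absolutelyContinuous_isAddHaarMeasure (volume : Measure (Euc n)) μH[(n : ℝ)]) h0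

lemma aux_upper (n : ℕ) (hn : 2 ≤ n) (d C₀ : ℝ) (hd0 : 0 < d)
    (hdn : d < (n : ℝ) - 1) (hC₀ : 1 ≤ C₀) (Γ : Set (Euc n)) (hne : Γ.Nonempty)
    (hcl : IsClosed Γ) (hA : AhlforsRegular n d C₀ Γ) (x : Euc n) (r : ℝ) (hr : 0 < r)
    (hx : infDist x Γ ≤ 2 * r) :
    measW n d Γ (ball x r) ≤ ENNReal.ofReal ((C₀ * 2 ^ (n - 1)) *
      (n * volume.real (ball (0 : Euc n) 1) * 13 * (C₀ * 10 ^ d)) * r ^ (d + 1)) := by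
  obtain ⟨z0, hz0, hz0d⟩ := hcl.exists_infDist_eq_dist hne x
  set S := Γ ∩ ball z0 (10 * r) with hS
  have hSm : MeasurableSet S := hcl.measurableSet.inter measurableSet_ball
  set ν : Measure (Euc n) := (μH[d]).restrict S with hν
  have hνS := (hA z0 hz0 (10 * r) (by positivity)).2
  haveI : IsFiniteMeasure ν := ⟨by
    rw [hν, Measure.restrict_apply_univ]
    exact hνS.trans_lt ENNReal.ofReal_lt_top⟩
  let k : Euc n → Euc n → ℝ≥0∞ := fun y z => ENNReal.ofReal ((dist y z ^ (n - 1))⁻¹)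
  have hk : Measurable (Function.uncurry k) := by
    have : Measurable fun p : Euc n × Euc n => dist p.1 p.2 := continuous_dist.measurable
    show Measurable fun p : Euc n × Euc n => ENNReal.ofReal ((dist p.1 p.2 ^ (n - 1))⁻¹)
    fun_prop
  set A : ℝ≥0∞ := ENNReal.ofReal (C₀ * 2 ^ (n - 1)) with hAdef
  have hpt : ∀ y ∈ ball x r, ENNReal.ofReal (weightW n d Γ y) ≤ A * ∫⁻ z, k y z ∂ν := by
    intro y hy
    obtain ⟨z1, hz1, hz1d⟩ := hcl.exists_infDist_eq_dist hne y
    set t := infDist y Γ with ht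
    rcases (infDist_nonneg : 0 ≤ infDist y Γ).eq_or_lt with h0 | hpos
    · have : weightW n d Γ y = 0 := by
        rw [weightW, ← h0, Real.zero_rpow (by linarith)]
      simp [this]
    replace hpos : 0 < t := hpos
    have hyx : dist y x < r := hy
    have ht3 : t < 3 * r := by
      have : infDist y Γ ≤ infDist x Γ + dist y x := infDist_le_infDist_add_dist
      linarith
    have hsub : Γ ∩ ball z1 t ⊆ S := by
      rintro z ⟨hzΓ, hzb⟩
      refine ⟨hzΓ, ?_⟩
      have h1 : dist z z1 < t := hzb
      have h2 := dist_triangle z z1 z0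
      have h3 := dist_triangle4 z1 y x z0
      rw [dist_comm z1 y] at h3
      simp only [mem_ball]
      linarith
    have hlow : ENNReal.ofReal (((2 * t) ^ (n - 1))⁻¹) * ENNReal.ofReal (C₀⁻¹ * t ^ d)
        ≤ ∫⁻ z, k y z ∂ν := by
      calc _ ≤ ENNReal.ofReal (((2 * t) ^ (n - 1))⁻¹) * μH[d] (Γ ∩ ball z1 t) := by
            gcongr
            exact (hA z1 hz1 t hpos).1
        _ = ∫⁻ z in Γ ∩ ball z1 t, ENNReal.ofReal (((2 * t) ^ (n - 1))⁻¹) ∂μH[d] := by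
            rw [setLIntegral_const]
        _ ≤ ∫⁻ z in Γ ∩ ball z1 t, k y z ∂μH[d] := by
            refine setLIntegral_mono' (hcl.measurableSet.inter measurableSet_ball) ?_
            rintro z ⟨hzΓ, hzb⟩
            have h1 : dist z z1 < t := hzb
            have h2 : t ≤ dist y z := infDist_le_dist_of_mem hzΓ
            have h3 := dist_triangle y z1 z
            rw [dist_comm z1 z] at h3
            refine ENNReal.ofReal_le_ofReal ?_
            have h4 : 0 < dist y z := lt_of_lt_of_le hpos h2
            gcongr
            linarith
        _ ≤ ∫⁻ z, k y z ∂ν := lintegral_mono_set hsub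
    refine le_trans ?_ (mul_le_mul_right hlow A)
    rw [hAdef, ← ENNReal.ofReal_mul (by positivity), ← ENNReal.ofReal_mul (by positivity)]
    refine ENNReal.ofReal_le_ofReal (le_of_eq ?_)
    have hC : C₀ ≠ 0 := by linarith
    have hn1 : d + 1 - (n : ℝ) = d - ((n - 1 : ℕ) : ℝ) := by
      rw [Nat.cast_sub (by omega)]; push_cast; ring
    rw [weightW, ← ht, hn1, Real.rpow_sub hpos, Real.rpow_natCast, mul_pow]
    field_simp
  rw [aux_measW]
  calc ∫⁻ y in ball x r, ENNReal.ofReal (weightW n d Γ y)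
      ≤ ∫⁻ y in ball x r, A * ∫⁻ z, k y z ∂ν := setLIntegral_mono' measurableSet_ball hpt
    _ = A * ∫⁻ y in ball x r, ∫⁻ z, k y z ∂ν := by
        rw [lintegral_const_mul' _ _ ENNReal.ofReal_ne_top]
    _ = A * ∫⁻ z, (∫⁻ y in ball x r, k y z) ∂ν := by
        rw [lintegral_lintegral_swap hk.aemeasurable]
    _ ≤ A * ∫⁻ z in S, ENNReal.ofReal (n * volume.real (ball (0 : Euc n) 1) * (13 * r)) ∂μH[d] := by
        refine mul_le_mul_right (setLIntegral_mono' hSm ?_) A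
        rintro z ⟨hzΓ, hzb⟩
        rw [← aux_kernel n hn z (13 * r) (by positivity)]
        refine lintegral_mono_set (ball_subset_ball' ?_)
        have h1 : dist z z0 < 10 * r := hzb
        have h2 := dist_triangle x z0 z
        rw [dist_comm z0 z] at h2
        linarith
    _ ≤ A * (ENNReal.ofReal (n * volume.real (ball (0 : Euc n) 1) * (13 * r)) *
          ENNReal.ofReal (C₀ * (10 * r) ^ d)) := by
        rw [setLIntegral_const]
        gcongr
    _ = _ := by
        have := aux_vol_pos n
        rw [hAdef, ← ENNReal.ofReal_mul (by positivity), ← ENNReal.ofReal_mul (by positivity)]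
        congr 1
        rw [Real.mul_rpow (by norm_num) hr.le, Real.rpow_add hr, Real.rpow_one]
        ring

lemma aux_lower (n : ℕ) (hn : 2 ≤ n) (d C₀ : ℝ)
    (hdn : d < (n : ℝ) - 1) (Γ : Set (Euc n)) (hne : Γ.Nonempty)
    (hcl : IsClosed Γ) (hA : AhlforsRegular n d C₀ Γ) (x : Euc n) (r D : ℝ) (hr : 0 < r)
    (hx : infDist x Γ + r ≤ D) :
    ENNReal.ofReal (D ^ (d + 1 - (n : ℝ)) * (r ^ (n : ℝ) * volume.real (ball (0 : Euc n) 1)))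
      ≤ measW n d Γ (ball x r) := by
  have hD : 0 < D := by
    have : 0 ≤ infDist x Γ := infDist_nonneg
    linarith
  rw [aux_measW, ENNReal.ofReal_mul (by positivity), ← aux_vol_ball n hn x r hr,
    ← setLIntegral_const]
  refine lintegral_mono_ae ?_
  have h1 : ∀ᵐ y ∂(volume.restrict (ball x r)), y ∉ Γ :=
    ae_restrict_of_ae (measure_eq_zero_iff_ae_notMem.1 (aux_null n d C₀ hdn Γ hne hA))
  filter_upwards [h1, ae_restrict_mem measurableSet_ball] with y hy hyb
  refine ENNReal.ofReal_le_ofReal ?_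
  have hpos : 0 < infDist y Γ := (hcl.notMem_iff_infDist_pos hne).1 hy
  have hyx : dist y x < r := hyb
  have : infDist y Γ ≤ infDist x Γ + dist y x := infDist_le_infDist_add_dist
  exact Real.rpow_le_rpow_of_nonpos hpos (by linarith) (by linarith)

lemma aux_upper_far (n : ℕ) (hn : 2 ≤ n) (d : ℝ)
    (hdn : d < (n : ℝ) - 1) (Γ : Set (Euc n)) (x : Euc n) (r D : ℝ) (hr : 0 < r) (hD : 0 < D)
    (hx : D ≤ infDist x Γ - r) :
    measW n d Γ (ball x r) ≤
    ENNReal.ofReal (D ^ (d + 1 - (n : ℝ)) * (r ^ (n : ℝ) * volume.real (ball (0 : Euc n) 1))) := by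
  rw [aux_measW, ENNReal.ofReal_mul (by positivity), ← aux_vol_ball n hn x r hr,
    ← setLIntegral_const]
  refine setLIntegral_mono' measurableSet_ball ?_
  intro y hyb
  refine ENNReal.ofReal_le_ofReal ?_
  have hyx : dist y x < r := hyb
  have : infDist x Γ ≤ infDist y Γ + dist x y := infDist_le_infDist_add_dist
  rw [dist_comm] at this
  exact Real.rpow_le_rpow_of_nonpos hD (by linarith) (by linarith)

/-- estimates for the measure of balls under the weighted measure `m`. -/
theorem statement1 (n : ℕ) (hn : 2 ≤ n) (d C₀ : ℝ) (hd0 : 0 < d)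
    (hdn : d < (n : ℝ) - 1) (hC₀ : 1 ≤ C₀) :
    ∃ C : ℝ, 1 ≤ C ∧
      ∀ Γ : Set (Euc n), Γ.Nonempty → IsClosed Γ → AhlforsRegular n d C₀ Γ →
        ∀ x : Euc n, ∀ r : ℝ, 0 < r →
          (2 * r ≤ infDist x Γ →
            ENNReal.ofReal (C⁻¹ * r ^ (n : ℝ) * weightW n d Γ x) ≤ measW n d Γ (ball x r) ∧
              measW n d Γ (ball x r) ≤ ENNReal.ofReal (C * r ^ (n : ℝ) * weightW n d Γ x)) ∧
          (infDist x Γ ≤ 2 * r →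
            ENNReal.ofReal (C⁻¹ * r ^ (d + 1)) ≤ measW n d Γ (ball x r) ∧
              measW n d Γ (ball x r) ≤ ENNReal.ofReal (C * r ^ (d + 1))) := by
  set v := volume.real (ball (0 : Euc n) 1) with hv
  have hvp : 0 < v := aux_vol_pos n
  set p : ℝ := (n : ℝ) - 1 - d with hp
  have hp0 : 0 < p := by linarith
  have hpe : d + 1 - (n : ℝ) = -p := by rw [hp]; ring
  set M : ℝ := (C₀ * 2 ^ (n - 1)) * (n * v * 13 * (C₀ * 10 ^ d)) with hM
  have hM0 : 0 ≤ M := by positivity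
  have h3p : (0 : ℝ) < 3 ^ p := by positivity
  have h2p : (0 : ℝ) < 2 ^ p := by positivity
  have ha : 0 < 3 ^ p / v := by positivity
  have hb : 0 < v * 2 ^ p := by positivity
  set C : ℝ := 1 + v * 2 ^ p + 3 ^ p / v + M with hC
  have hCp : 0 < C := by linarith
  have hCinv : C⁻¹ ≤ 3 ^ (-p) * v := by
    rw [Real.rpow_neg (by norm_num), inv_mul_eq_div, ← inv_div]
    exact inv_anti₀ ha (by linarith)
  refine ⟨C, by linarith, ?_⟩
  intro Γ hne hcl hA x r hr
  refine ⟨fun hx => ?_, fun hx => ⟨?_, ?_⟩⟩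
  · set t := infDist x Γ with ht
    have htp : 0 < t := by linarith
    have hw : weightW n d Γ x = t ^ (-p) := by rw [weightW, hpe]
    have hwp : 0 < t ^ (-p) := by positivity
    have hrn : 0 < r ^ (n : ℝ) := by positivity
    constructor
    · refine le_trans ?_ (aux_lower n hn d C₀ hdn Γ hne hcl hA x r (3 * t) hr (by linarith))
      refine ENNReal.ofReal_le_ofReal ?_
      rw [hw, hpe, Real.mul_rpow (by norm_num) htp.le, ← hv]
      calc C⁻¹ * r ^ (n : ℝ) * t ^ (-p) ≤ (3 ^ (-p) * v) * r ^ (n : ℝ) * t ^ (-p) := by gcongr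
        _ = _ := by ring
    · refine le_trans (aux_upper_far n hn d hdn Γ x r (t / 2) hr (by linarith) (by linarith)) ?_
      refine ENNReal.ofReal_le_ofReal ?_
      rw [hw, hpe, Real.div_rpow htp.le (by norm_num), Real.rpow_neg (by norm_num : (0:ℝ) ≤ 2),
        div_inv_eq_mul, ← hv]
      calc t ^ (-p) * 2 ^ p * (r ^ (n : ℝ) * v) = (v * 2 ^ p) * r ^ (n : ℝ) * t ^ (-p) := by ring
        _ ≤ _ := by gcongr; linarith
  · refine le_trans ?_ (aux_lower n hn d C₀ hdn Γ hne hcl hA x r (3 * r) hr (by linarith))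
    refine ENNReal.ofReal_le_ofReal ?_
    have hr1 : r ^ (d + 1) = r ^ (-p) * r ^ (n : ℝ) := by
      rw [← Real.rpow_add hr]; congr 1; rw [hp]; ring
    rw [hpe, Real.mul_rpow (by norm_num) hr.le, ← hv]
    calc C⁻¹ * r ^ (d + 1) ≤ (3 ^ (-p) * v) * r ^ (d + 1) := by gcongr
      _ = _ := by rw [hr1]; ring
  · refine le_trans (aux_upper n hn d C₀ hd0 hdn hC₀ Γ hne hcl hA x r hr hx) ?_
    refine ENNReal.ofReal_le_ofReal ?_
    have : M ≤ C := by linarith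
    rw [← hv, ← hM]
    gcongr
end
end

section
/- There exists a constant C ≥ 1, depending only on n, d, and C₀, such that for every x ∈ ℝⁿ and all radii 0 < s < r, C⁻¹ (r/s)^{d+1} ≤ m(B(x,r))/m(B(x,s)) ≤ C (r/s)ⁿ. In particular, m is a doubling measure on ℝⁿ. -/
open MeasureTheory Metric Set Filter
open scoped ENNReal NNReal Topology

noncomputable section

lemma aux_kernel_s2 (n : ℕ) (hn : 2 ≤ n) : ∃ K : ℝ, 0 < K ∧ ∀ (p : Euc n) (ρ : ℝ), 0 < ρ →
    ∫⁻ y in ball p ρ, ENNReal.ofReal (dist y p ^ (1 - (n : ℝ))) ≤ ENNReal.ofReal (K * ρ) := by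
  have : Nonempty (Fin n) := ⟨⟨0, by omega⟩⟩
  have hV : 0 < (volume : Measure (Euc n)).real (ball 0 1) := by
    rw [Measure.real, ENNReal.toReal_pos_iff]
    exact ⟨measure_ball_pos _ _ one_pos, measure_ball_lt_top⟩
  refine ⟨n * (volume : Measure (Euc n)).real (ball 0 1), by positivity, fun p ρ hρ => ?_⟩
  set g : ℝ → ℝ := (Iio ρ).indicator (fun t => t ^ (1 - (n : ℝ))) with hg
  have hfr : Module.finrank ℝ (Euc n) = n := by simp
  have key : EqOn (fun y : ℝ => y ^ (Module.finrank ℝ (Euc n) - 1) • g y)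
      ((Iio ρ).indicator (fun _ => (1 : ℝ))) (Ioi 0) := by
    intro y hy
    have hy : (0 : ℝ) < y := hy
    simp only [hfr, hg, indicator]
    split_ifs
    · rw [smul_eq_mul, ← Real.rpow_natCast, ← Real.rpow_add hy, Nat.cast_sub (by omega)]
      simp
    · simp
  have hint : IntegrableOn ((Iio ρ).indicator (fun _ => (1 : ℝ))) (Ioi 0) := by
    rw [IntegrableOn, integrable_indicator_iff measurableSet_Iio, IntegrableOn,
      Measure.restrict_restrict measurableSet_Iio]
    apply integrableOn_const
    rw [inter_comm, Ioi_inter_Iio]; simp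
    simp
  have hI : Integrable (fun x : Euc n => g ‖x‖) volume := by
    rw [integrable_fun_norm_addHaar volume, integrableOn_congr_fun key measurableSet_Ioi]
    exact hint
  have hval : ∫ x : Euc n, g ‖x‖ = n * (volume : Measure (Euc n)).real (ball 0 1) * ρ := by
    rw [integral_fun_norm_addHaar volume, setIntegral_congr_fun measurableSet_Ioi key,
      setIntegral_indicator measurableSet_Iio, Ioi_inter_Iio]
    simp [hρ.le, mul_assoc]
  have hg0 : ∀ x : Euc n, 0 ≤ g ‖x‖ := fun x =>
    indicator_apply_nonneg fun _ => Real.rpow_nonneg (norm_nonneg _) _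
  rw [← hval, ofReal_integral_eq_lintegral_ofReal hI (Eventually.of_forall hg0),
    ← lintegral_sub_right_eq_self (μ := volume) (fun x => ENNReal.ofReal (g ‖x‖)) p,
    ← lintegral_indicator measurableSet_ball]
  apply lintegral_mono
  intro y
  simp only [hg, indicator, mem_ball, mem_Iio, dist_eq_norm]
  split_ifs <;> simp

lemma aux_pt (n : ℕ) (hn : 2 ≤ n) (d C₀ : ℝ) (hdn : d < (n : ℝ) - 1) (hC₀ : 1 ≤ C₀)
    (Γ : Set (Euc n)) (hcl : IsClosed Γ) (hA : AhlforsRegular n d C₀ Γ)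
    (z : Euc n) (hz : z ∈ Γ) (R : ℝ) (y : Euc n) (hy : y ∈ ball z R) :
    ENNReal.ofReal (weightW n d Γ y) ≤ ENNReal.ofReal (C₀ * 2 ^ ((n : ℝ) - 1)) *
      ∫⁻ p in Γ ∩ ball z (3 * R), ENNReal.ofReal (dist y p ^ (1 - (n : ℝ))) ∂μH[d] := by
  have hn' : (2 : ℝ) ≤ n := by exact_mod_cast hn
  rw [mem_ball] at hy
  obtain ⟨q, hq, hqd⟩ := hcl.exists_infDist_eq_dist ⟨z, hz⟩ y
  have hδ : infDist y Γ ≤ dist y z := infDist_le_dist_of_mem hz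
  set t := infDist y Γ with ht
  rcases (infDist_nonneg (x := y) (s := Γ)).eq_or_lt with h0 | h0
  · rw [weightW, ← h0, Real.zero_rpow (by linarith)]; simp
  rw [← ht] at h0
  have hsub : Γ ∩ ball q t ⊆ Γ ∩ ball z (3 * R) := by
    rintro p ⟨hp, hpq⟩
    refine ⟨hp, ?_⟩
    rw [mem_ball] at *
    have := dist_triangle p q z
    have := dist_triangle q y z
    rw [dist_comm q y] at this
    linarith
  have hlow : ENNReal.ofReal ((2 * t) ^ (1 - (n : ℝ)) * (C₀⁻¹ * t ^ d)) ≤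
      ∫⁻ p in Γ ∩ ball z (3 * R), ENNReal.ofReal (dist y p ^ (1 - (n : ℝ))) ∂μH[d] := by
    refine le_trans ?_ (lintegral_mono_set hsub)
    rw [ENNReal.ofReal_mul (by positivity)]
    refine le_trans (mul_le_mul_right (hA q hq t h0).1 _) ?_
    rw [← setLIntegral_const]
    refine setLIntegral_mono' (hcl.measurableSet.inter measurableSet_ball) ?_
    rintro p ⟨hp, hpq⟩
    rw [mem_ball] at hpq
    have h1 : t ≤ dist y p := infDist_le_dist_of_mem hp
    have h2 := dist_triangle y q p
    rw [dist_comm q p] at h2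
    apply ENNReal.ofReal_le_ofReal
    exact Real.rpow_le_rpow_of_nonpos (by linarith) (by linarith) (by linarith)
  refine le_trans ?_ (mul_le_mul_right hlow _)
  rw [← ENNReal.ofReal_mul (by positivity)]
  apply ENNReal.ofReal_le_ofReal
  apply le_of_eq
  rw [weightW, ← ht, Real.mul_rpow (by norm_num) h0.le]
  have e1 : (2 : ℝ) ^ ((n : ℝ) - 1) * 2 ^ (1 - (n : ℝ)) = 1 := by
    rw [← Real.rpow_add (by norm_num)]; simp
  have e2 : t ^ (d + 1 - (n : ℝ)) = t ^ (1 - (n : ℝ)) * t ^ d := by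
    rw [← Real.rpow_add h0]; congr 1; ring
  have e3 : C₀ * C₀⁻¹ = 1 := mul_inv_cancel₀ (by linarith)
  rw [e2]
  calc _ = (C₀ * C₀⁻¹) * ((2 : ℝ) ^ ((n : ℝ) - 1) * 2 ^ (1 - (n : ℝ)))
        * (t ^ (1 - (n : ℝ)) * t ^ d) := by rw [e1, e3]; ring
    _ = _ := by ring

lemma aux_ball (n : ℕ) (hn : 2 ≤ n) (d C₀ : ℝ) (hd0 : 0 < d)
    (hdn : d < (n : ℝ) - 1) (hC₀ : 1 ≤ C₀) :
    ∃ A : ℝ, 0 < A ∧ ∀ Γ : Set (Euc n), IsClosed Γ → AhlforsRegular n d C₀ Γ →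
      ∀ z ∈ Γ, ∀ R : ℝ, 0 < R →
        measW n d Γ (ball z R) ≤ ENNReal.ofReal (A * R ^ (d + 1)) := by
  obtain ⟨K, hK, hKer⟩ := aux_kernel_s2 n hn
  refine ⟨C₀ * 2 ^ ((n : ℝ) - 1) * (K * 4 * (C₀ * 3 ^ d)), by positivity,
    fun Γ hcl hA z hz R hR => ?_⟩
  have : IsFiniteMeasure ((μH[d] : Measure (Euc n)).restrict (Γ ∩ ball z (3 * R))) :=
    ⟨by
      rw [Measure.restrict_apply_univ]
      exact lt_of_le_of_lt (hA z hz _ (by positivity)).2 ENNReal.ofReal_lt_top⟩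
  have hm : Measurable (fun q : Euc n × Euc n =>
      ENNReal.ofReal (dist q.1 q.2 ^ (1 - (n : ℝ)))) :=
    ((continuous_dist.measurable).pow_const _).ennreal_ofReal
  rw [measW, withDensity_apply _ measurableSet_ball]
  calc ∫⁻ y in ball z R, ENNReal.ofReal (weightW n d Γ y)
      ≤ ∫⁻ y in ball z R, ENNReal.ofReal (C₀ * 2 ^ ((n : ℝ) - 1)) *
      ∫⁻ p in Γ ∩ ball z (3 * R), ENNReal.ofReal (dist y p ^ (1 - (n : ℝ))) ∂μH[d] :=
        setLIntegral_mono' measurableSet_ball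
          (aux_pt n hn d C₀ hdn hC₀ Γ hcl hA z hz R)
    _ = ENNReal.ofReal (C₀ * 2 ^ ((n : ℝ) - 1)) * ∫⁻ y in ball z R,
      ∫⁻ p in Γ ∩ ball z (3 * R), ENNReal.ofReal (dist y p ^ (1 - (n : ℝ))) ∂μH[d] := by
        rw [lintegral_const_mul' _ _ ENNReal.ofReal_ne_top]
    _ = ENNReal.ofReal (C₀ * 2 ^ ((n : ℝ) - 1)) * ∫⁻ p in Γ ∩ ball z (3 * R),
      ∫⁻ y in ball z R, ENNReal.ofReal (dist y p ^ (1 - (n : ℝ))) ∂volume ∂μH[d] := by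
        rw [lintegral_lintegral_swap hm.aemeasurable]
    _ ≤ ENNReal.ofReal (C₀ * 2 ^ ((n : ℝ) - 1)) * ∫⁻ p in Γ ∩ ball z (3 * R),
        ENNReal.ofReal (K * (4 * R)) ∂μH[d] := by
        refine mul_le_mul_right ?_ _
        refine setLIntegral_mono' (hcl.measurableSet.inter measurableSet_ball) ?_
        rintro p ⟨hp, hpz⟩
        refine le_trans (lintegral_mono_set ?_) (hKer p (4 * R) (by positivity))
        intro y hy
        rw [mem_ball] at *
        have := dist_triangle y z p
        rw [dist_comm z p] at this
        linarith
    _ ≤ ENNReal.ofReal (C₀ * 2 ^ ((n : ℝ) - 1)) * (ENNReal.ofReal (K * (4 * R)) *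
          ENNReal.ofReal (C₀ * (3 * R) ^ d)) := by
        rw [setLIntegral_const]
        refine mul_le_mul_right (mul_le_mul_right ?_ _) _
        exact (hA z hz _ (by positivity)).2
    _ = _ := by
        rw [← ENNReal.ofReal_mul (by positivity), ← ENNReal.ofReal_mul (by positivity)]
        congr 1
        rw [Real.mul_rpow (by norm_num) hR.le, Real.rpow_add_one hR.ne']
        ring

lemma aux_two (n : ℕ) (hn : 2 ≤ n) (d C₀ : ℝ) (hd0 : 0 < d)
    (hdn : d < (n : ℝ) - 1) (hC₀ : 1 ≤ C₀) :
    ∃ a b : ℝ, 0 < a ∧ 0 < b ∧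
      ∀ Γ : Set (Euc n), Γ.Nonempty → IsClosed Γ → AhlforsRegular n d C₀ Γ →
      ∀ x : Euc n, ∀ r : ℝ, 0 < r →
        ENNReal.ofReal (a * (r ^ (n : ℝ) * max r (infDist x Γ) ^ (d + 1 - (n : ℝ))))
          ≤ measW n d Γ (ball x r) ∧
        measW n d Γ (ball x r) ≤
          ENNReal.ofReal (b * (r ^ (n : ℝ) * max r (infDist x Γ) ^ (d + 1 - (n : ℝ)))) := by
  obtain ⟨A, hA0, hAb⟩ := aux_ball n hn d C₀ hd0 hdn hC₀
  have : Nonempty (Fin n) := ⟨⟨0, by omega⟩⟩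
  set V := (volume : Measure (Euc n)).real (ball 0 1) with hVdef
  have hV : 0 < V := by
    rw [hVdef, Measure.real, ENNReal.toReal_pos_iff]
    exact ⟨measure_ball_pos _ _ one_pos, measure_ball_lt_top⟩
  have hvol : ∀ (x : Euc n) (r : ℝ), 0 < r →
      volume (ball x r) = ENNReal.ofReal (r ^ (n : ℝ) * V) := by
    intro x r hr
    rw [Measure.addHaar_ball_of_pos _ _ hr, ENNReal.ofReal_mul (by positivity), hVdef,
      ofReal_measureReal]
    simp
  set β := d + 1 - (n : ℝ) with hβ
  have hβ0 : β < 0 := by rw [hβ]; linarith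
  refine ⟨V * 2 ^ β, max (V * 2 ^ (-β)) (A * 3 ^ (d + 1) * 2 ^ (-β)), by positivity,
    by positivity, fun Γ hne hcl hA x r hr => ?_⟩
  have hδ0 : 0 ≤ infDist x Γ := infDist_nonneg
  set M := max r (infDist x Γ) with hM
  have hMr : r ≤ M := le_max_left _ _
  have hMd : infDist x Γ ≤ M := le_max_right _ _
  have hM0 : 0 < M := by linarith
  have hhalf : (M / 2) ^ β = 2 ^ (-β) * M ^ β := by
    rw [Real.div_rpow hM0.le (by norm_num), Real.rpow_neg (by norm_num)]
    field_simp
  constructor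
  · have hnull := aux_null n d C₀ hdn Γ hne hA
    rw [measW, withDensity_apply _ measurableSet_ball]
    calc _ = ENNReal.ofReal ((2 * M) ^ β) * volume (ball x r) := by
          rw [hvol x r hr, ← ENNReal.ofReal_mul (by positivity),
            Real.mul_rpow (by norm_num) hM0.le]
          congr 1; ring
      _ = ∫⁻ y in ball x r, ENNReal.ofReal ((2 * M) ^ β) := by rw [setLIntegral_const]
      _ ≤ _ := by
          apply lintegral_mono_ae
          have h1 : ∀ᵐ y ∂(volume : Measure (Euc n)), y ∉ Γ :=
            measure_eq_zero_iff_ae_notMem.1 hnull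
          filter_upwards [ae_restrict_of_ae h1, ae_restrict_mem measurableSet_ball] with y hy hyb
          apply ENNReal.ofReal_le_ofReal
          have h2 : 0 < infDist y Γ := (hcl.notMem_iff_infDist_pos hne).1 hy
          have h3 : infDist y Γ ≤ infDist x Γ + dist y x := infDist_le_infDist_add_dist
          rw [mem_ball] at hyb
          exact Real.rpow_le_rpow_of_nonpos h2 (by linarith) hβ0.le
  · rcases le_or_gt (2 * r) (infDist x Γ) with h | h
    · have hMe : M = infDist x Γ := max_eq_right (by linarith)
      rw [measW, withDensity_apply _ measurableSet_ball]
      calc _ ≤ ∫⁻ y in ball x r, ENNReal.ofReal ((M / 2) ^ β) := by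
            refine setLIntegral_mono' measurableSet_ball fun y hy => ?_
            apply ENNReal.ofReal_le_ofReal
            have h3 : infDist x Γ ≤ infDist y Γ + dist x y := infDist_le_infDist_add_dist
            rw [mem_ball, dist_comm] at hy
            exact Real.rpow_le_rpow_of_nonpos (by positivity) (by linarith) hβ0.le
        _ = ENNReal.ofReal ((V * 2 ^ (-β)) * (r ^ (n : ℝ) * M ^ β)) := by
            rw [setLIntegral_const, hvol x r hr, ← ENNReal.ofReal_mul (by positivity), hhalf]
            congr 1; ring
        _ ≤ _ := by
            apply ENNReal.ofReal_le_ofReal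
            gcongr
            exact le_max_left _ _
    · obtain ⟨z, hz, hxz⟩ := (infDist_lt_iff hne).1 h
      have hsub : ball x r ⊆ ball z (3 * r) := ball_subset_ball' (by linarith)
      have hM2 : M / 2 ≤ r := by
        have : M ≤ 2 * r := max_le (by linarith) h.le
        linarith
      have hrb : r ^ β ≤ 2 ^ (-β) * M ^ β := by
        rw [← hhalf]
        exact Real.rpow_le_rpow_of_nonpos (by positivity) hM2 hβ0.le
      refine (measure_mono hsub).trans ((hAb Γ hcl hA z hz _ (by positivity)).trans ?_)
      apply ENNReal.ofReal_le_ofReal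
      calc A * (3 * r) ^ (d + 1) = A * 3 ^ (d + 1) * (r ^ (n : ℝ) * r ^ β) := by
            rw [Real.mul_rpow (by norm_num) hr.le, ← Real.rpow_add hr, hβ]
            ring_nf
        _ ≤ A * 3 ^ (d + 1) * (r ^ (n : ℝ) * (2 ^ (-β) * M ^ β)) := by gcongr
        _ = A * 3 ^ (d + 1) * 2 ^ (-β) * (r ^ (n : ℝ) * M ^ β) := by ring
        _ ≤ _ := by
            gcongr
            exact le_max_right _ _

/-- two-sided doubling estimates for the weighted measure `m`;
in particular `m` is doubling. -/
theorem statement2 (n : ℕ) (hn : 2 ≤ n) (d C₀ : ℝ) (hd0 : 0 < d)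
    (hdn : d < (n : ℝ) - 1) (hC₀ : 1 ≤ C₀) :
    ∃ C : ℝ, 1 ≤ C ∧
      ∀ Γ : Set (Euc n), Γ.Nonempty → IsClosed Γ → AhlforsRegular n d C₀ Γ →
        (∀ x : Euc n, ∀ r s : ℝ, 0 < s → s < r →
          ENNReal.ofReal (C⁻¹ * (r / s) ^ (d + 1)) * measW n d Γ (ball x s)
              ≤ measW n d Γ (ball x r) ∧
            measW n d Γ (ball x r)
              ≤ ENNReal.ofReal (C * (r / s) ^ (n : ℝ)) * measW n d Γ (ball x s)) ∧
        ∀ x : Euc n, ∀ r : ℝ, 0 < r →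
          measW n d Γ (ball x (2 * r)) ≤ ENNReal.ofReal C * measW n d Γ (ball x r) := by
  obtain ⟨a, b, ha, hb, hab⟩ := aux_two n hn d C₀ hd0 hdn hC₀
  have h2n : (1 : ℝ) ≤ 2 ^ (n : ℝ) := Real.one_le_rpow (by norm_num) (by positivity)
  set D := max 1 (b / a) with hD
  have hD1 : 1 ≤ D := le_max_left _ _
  have hba : b ≤ D * a := by
    have : b / a ≤ D := le_max_right _ _
    rwa [div_le_iff₀ ha] at this
  have hDC : D ≤ D * 2 ^ (n : ℝ) := le_mul_of_one_le_right (by linarith) h2n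
  have hD0 : 0 < D := by linarith
  set β := d + 1 - (n : ℝ) with hβ
  have hβ0 : β < 0 := by rw [hβ]; linarith
  have upper : ∀ Γ : Set (Euc n), Γ.Nonempty → IsClosed Γ → AhlforsRegular n d C₀ Γ →
      ∀ x : Euc n, ∀ r s : ℝ, 0 < s → s < r → measW n d Γ (ball x r)
              ≤ ENNReal.ofReal (D * (r / s) ^ (n : ℝ)) * measW n d Γ (ball x s) := by
    intro Γ hne hcl hA x r s hs hsr
    have hr : 0 < r := hs.trans hsr
    refine (hab Γ hne hcl hA x r hr).2.trans
      (le_trans ?_ (mul_le_mul_right (hab Γ hne hcl hA x s hs).1 _))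
    rw [← ENNReal.ofReal_mul (by positivity)]
    apply ENNReal.ofReal_le_ofReal
    have hMs : 0 < max s (infDist x Γ) := lt_max_of_lt_left hs
    have h1 : max r (infDist x Γ) ^ β ≤ max s (infDist x Γ) ^ β :=
      Real.rpow_le_rpow_of_nonpos hMs (max_le_max hsr.le le_rfl) hβ0.le
    calc b * (r ^ (n : ℝ) * max r (infDist x Γ) ^ β)
        ≤ (D * a) * (r ^ (n : ℝ) * max s (infDist x Γ) ^ β) := by gcongr
      _ = _ := by
          rw [Real.div_rpow hr.le hs.le]
          field_simp
  refine ⟨D * 2 ^ (n : ℝ), by linarith, fun Γ hne hcl hA => ⟨fun x r s hs hsr => ⟨?_, ?_⟩, ?_⟩⟩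
  · have hr : 0 < r := hs.trans hsr
    have hrs : 0 < r / s := div_pos hr hs
    refine le_trans (mul_le_mul_right (hab Γ hne hcl hA x s hs).2 _)
      (le_trans ?_ (hab Γ hne hcl hA x r hr).1)
    rw [← ENNReal.ofReal_mul (by positivity)]
    apply ENNReal.ofReal_le_ofReal
    have hMs : 0 < max s (infDist x Γ) := lt_max_of_lt_left hs
    have hMr : 0 < max r (infDist x Γ) := lt_max_of_lt_left hr
    have h0 : max r (infDist x Γ) ≤ (r / s) * max s (infDist x Γ) := by
      apply max_le
      · calc r = r / s * s := by field_simp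
          _ ≤ _ := by gcongr; exact le_max_left _ _
      · calc infDist x Γ ≤ 1 * max s (infDist x Γ) := by rw [one_mul]; exact le_max_right _ _
          _ ≤ _ := by gcongr; exact (one_le_div hs).2 hsr.le
    have h1 : (r / s) ^ β * max s (infDist x Γ) ^ β ≤ max r (infDist x Γ) ^ β := by
      rw [← Real.mul_rpow hrs.le hMs.le]
      exact Real.rpow_le_rpow_of_nonpos hMr h0 hβ0.le
    have h2 : (r / s) ^ (d + 1) = (r / s) ^ (n : ℝ) * (r / s) ^ β := by
      rw [← Real.rpow_add hrs, hβ]; ring_nf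
    have h3 : (r / s) ^ (n : ℝ) * s ^ (n : ℝ) = r ^ (n : ℝ) := by
      rw [← Real.mul_rpow hrs.le hs.le]; congr 1; field_simp
    have h4 : (D * 2 ^ (n : ℝ))⁻¹ * b ≤ a := by
      rw [inv_mul_le_iff₀ (by positivity)]
      exact hba.trans (by gcongr)
    calc _ = ((D * 2 ^ (n : ℝ))⁻¹ * b) * (((r / s) ^ (n : ℝ) * s ^ (n : ℝ)) *
          ((r / s) ^ β * max s (infDist x Γ) ^ β)) := by rw [h2]; ring
      _ ≤ a * (r ^ (n : ℝ) * max r (infDist x Γ) ^ β) := by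
          rw [h3]; gcongr
  · refine (upper Γ hne hcl hA x r s hs hsr).trans ?_
    have hr : 0 < r := hs.trans hsr
    gcongr
  · intro x r hr
    have := upper Γ hne hcl hA x (2 * r) r hr (by linarith)
    rwa [mul_div_cancel_right₀ _ hr.ne'] at this
end
end

section
/- There exists ε > 0, depending only on n, d, and C₀, such that for every x₀ ∈ Γ and every r > 0 there exists a point A ∈ ℝⁿ with |A − x₀| ≤ r and dist(A, Γ) ≥ ε r. (Existence of corkscrew points.) -/
open MeasureTheory Metric Set Filter
open scoped ENNReal NNReal Topology

noncomputable section

/-- existence of corkscrew points. -/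
theorem statement3 (n : ℕ) (hn : 2 ≤ n) (d C₀ : ℝ) (hd0 : 0 < d)
    (hdn : d < (n : ℝ) - 1) (hC₀ : 1 ≤ C₀) :
    ∃ ε : ℝ, 0 < ε ∧
      ∀ Γ : Set (Euc n), Γ.Nonempty → IsClosed Γ → AhlforsRegular n d C₀ Γ →
        ∀ x₀ ∈ Γ, ∀ r : ℝ, 0 < r →
          ∃ A : Euc n, dist A x₀ ≤ r ∧ ε * r ≤ infDist A Γ := by
  -- choice of ε
  have hnd : 0 < (n : ℝ) - d := by linarith
  have ht : Tendsto (fun ε : ℝ => C₀ * (C₀ * 2 ^ d * 2 ^ n) * ε ^ ((n : ℝ) - d)) (𝓝[>] 0) (𝓝 0) := by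
    have h1 : Tendsto (fun ε : ℝ => ε ^ ((n : ℝ) - d)) (𝓝 0) (𝓝 0) := by
      have := (Real.continuousAt_rpow_const 0 ((n : ℝ) - d) (Or.inr hnd.le)).tendsto
      rwa [Real.zero_rpow hnd.ne'] at this
    have h2 := (h1.const_mul (C₀ * (C₀ * 2 ^ d * 2 ^ n))).mono_left
      (nhdsWithin_le_nhds (s := Ioi (0 : ℝ)))
    simpa using h2
  obtain ⟨ε, ⟨hε1, hε2⟩, hε0⟩ := ((((ht.eventually (gt_mem_nhds (zero_lt_one))).and
    (nhdsWithin_le_nhds (gt_mem_nhds (show (0 : ℝ) < 1 / 2 by norm_num)))).and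
      self_mem_nhdsWithin)).exists
  replace hε0 : 0 < ε := hε0
  refine ⟨ε, hε0, ?_⟩
  intro Γ hne hcl hA x₀ hx₀ r hr
  by_contra! hcon
  have hεr : 0 < ε * r := by positivity
  set G : Set (Euc n) := Γ ∩ ball x₀ (2 * r) with hG
  have hGm : MeasurableSet G := hcl.measurableSet.inter measurableSet_ball
  have hGle := (hA x₀ hx₀ (2 * r) (by positivity)).2
  let μ : Measure (Euc n) := (μH[d]).restrict G
  have hμu : μ univ ≤ ENNReal.ofReal (C₀ * (2 * r) ^ d) := by
    simpa [μ] using hGle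
  have : IsFiniteMeasure μ := ⟨hμu.trans_lt ENNReal.ofReal_lt_top⟩
  let S : Set (Euc n × Euc n) := {p | dist p.1 x₀ < r ∧ dist p.1 p.2 < 2 * (ε * r)}
  have hS : MeasurableSet S := by
    apply IsOpen.measurableSet
    have o1 : IsOpen {p : Euc n × Euc n | dist p.1 x₀ < r} :=
      isOpen_lt (by fun_prop) (by fun_prop)
    have o2 : IsOpen {p : Euc n × Euc n | dist p.1 p.2 < 2 * (ε * r)} :=
      isOpen_lt (by fun_prop) (by fun_prop)
    exact o1.inter o2
  set ω : ℝ≥0∞ := volume (ball (0 : Euc n) 1) with hω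
  have hω0 : ω ≠ 0 := (measure_ball_pos _ _ one_pos).ne'
  have hωt : ω ≠ ⊤ := measure_ball_lt_top.ne
  have : Nonempty (Fin n) := ⟨⟨0, by omega⟩⟩
  have : Nontrivial (Euc n) := inferInstance
  have hvol : ∀ (x : Euc n) (s : ℝ), 0 ≤ s → volume (ball x s) = ENNReal.ofReal (s ^ n) * ω := by
    intro x s hs
    have := Measure.addHaar_ball (volume : Measure (Euc n)) x hs
    simpa using this
  have hup : (volume.prod μ) S ≤
      ENNReal.ofReal ((2 * (ε * r)) ^ n) * ω * ENNReal.ofReal (C₀ * (2 * r) ^ d) := by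
    rw [Measure.prod_apply_symm hS]
    calc ∫⁻ y, volume ((fun x => (x, y)) ⁻¹' S) ∂μ
        ≤ ∫⁻ y, ENNReal.ofReal ((2 * (ε * r)) ^ n) * ω ∂μ := by
          apply lintegral_mono
          intro y
          rw [← hvol y _ (by positivity)]
          apply measure_mono
          intro x hx
          exact hx.2
      _ = ENNReal.ofReal ((2 * (ε * r)) ^ n) * ω * μ univ := by rw [lintegral_const]
      _ ≤ _ := by gcongr
  have hlow : ENNReal.ofReal (C₀⁻¹ * (ε * r) ^ d) * (ENNReal.ofReal (r ^ n) * ω) ≤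
      (volume.prod μ) S := by
    rw [Measure.prod_apply hS, ← hvol x₀ r hr.le, ← setLIntegral_const]
    refine le_trans (setLIntegral_mono' measurableSet_ball ?_) (setLIntegral_le_lintegral (ball x₀ r) _)
    intro x hx
    have hx' : dist x x₀ < r := hx
    obtain ⟨z, hz, hxz⟩ := (infDist_lt_iff hne).1 (hcon x hx'.le)
    refine (hA z hz _ hεr).1.trans ?_
    rw [Measure.restrict_apply (measurable_prodMk_left hS)]
    apply measure_mono
    rintro y ⟨hyΓ, hyz⟩
    have hyz' : dist y z < ε * r := hyz
    have h1 : dist x y < 2 * (ε * r) := by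
      have := dist_triangle_right x y z
      linarith
    refine ⟨⟨hx', h1⟩, hyΓ, ?_⟩
    have h2 := dist_triangle_left y x₀ x
    have h3 : ε * r < 1 / 2 * r := by gcongr
    rw [mem_ball]
    linarith
  have h := hlow.trans hup
  have h' : ENNReal.ofReal (C₀⁻¹ * (ε * r) ^ d) * ENNReal.ofReal (r ^ n) ≤
      ENNReal.ofReal ((2 * (ε * r)) ^ n) * ENNReal.ofReal (C₀ * (2 * r) ^ d) := by
    rw [← ENNReal.mul_le_mul_iff_left hω0 hωt]
    calc _ = _ := by ring
      _ ≤ _ := h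
      _ = _ := by ring
  rw [← ENNReal.ofReal_mul (by positivity), ← ENNReal.ofReal_mul (by positivity),
    ENNReal.ofReal_le_ofReal_iff (by positivity)] at h'
  rw [Real.mul_rpow hε0.le hr.le, Real.mul_rpow (by norm_num) hr.le] at h'
  rw [Real.rpow_sub hε0, Real.rpow_natCast] at hε1
  have hεd : 0 < ε ^ d := by positivity
  have hrd : 0 < r ^ d := by positivity
  have hrn : 0 < r ^ n := by positivity
  have hC : 0 < C₀ := by linarith
  have e1 : C₀ * (C₀ * 2 ^ d * 2 ^ n) * ε ^ n < ε ^ d := by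
    rw [← mul_div_assoc, div_lt_one hεd] at hε1
    exact hε1
  have e2 : C₀⁻¹ * (C₀ * (C₀ * 2 ^ d * 2 ^ n) * ε ^ n) * (r ^ d * r ^ n) <
      C₀⁻¹ * ε ^ d * (r ^ d * r ^ n) := by gcongr
  have e3 : C₀⁻¹ * (C₀ * (C₀ * 2 ^ d * 2 ^ n) * ε ^ n) = C₀ * 2 ^ d * 2 ^ n * ε ^ n := by
    field_simp
  rw [e3] at e2
  rw [mul_pow, mul_pow] at h'
  nlinarith [h', e2]
end
end

section
/- Let u ∈ L¹_loc(Ω) possess a distributional gradient ∇u on Ω belonging to L²(Ω, m). Then u ∈ L¹_loc(ℝⁿ), and u has a distributional gradient on all of ℝⁿ: there exists v ∈ L¹_loc(ℝⁿ; ℝⁿ) with ∫_{ℝⁿ} v·φ dx = −∫_{ℝⁿ} u div φ dx for every φ ∈ C_c^∞(ℝⁿ; ℝⁿ), and v agrees a.e. on Ω with ∇u, so that v ∈ L²(ℝⁿ, m). Consequently W coincides with the set of u ∈ L¹_loc(ℝⁿ) whose distributional gradient on ℝⁿ lies in L²(ℝⁿ, m). -/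
open MeasureTheory Metric Set Filter
open scoped ENNReal NNReal Topology

noncomputable section

lemma s4_shadow_null {n : ℕ} (Γ : Set (Euc n)) (hΓ : μH[(n : ℝ) - 1] Γ = 0)
    (z : Euc n) (hz : z ≠ 0) : volume {x : Euc n | ∃ t : ℝ, x + t • z ∈ Γ} = 0 := by
  set K : Submodule ℝ (Euc n) := (Submodule.span ℝ {z})ᗮ with hK
  have hfr : (Module.finrank ℝ K : ℝ) = (n : ℝ) - 1 := by
    have h1 := Submodule.finrank_add_finrank_orthogonal (Submodule.span ℝ {z})
    rw [finrank_span_singleton hz, finrank_euclideanSpace, Fintype.card_fin] at h1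
    have : ((1 + Module.finrank ℝ K : ℕ) : ℝ) = (n : ℝ) := congrArg Nat.cast h1
    push_cast at this
    linarith
  let P : Euc n →L[ℝ] K := K.orthogonalProjectionOnto
  have hPs : Function.Surjective (P : Euc n →ₗ[ℝ] K) := by
    intro y
    exact ⟨y, Submodule.orthogonalProjectionOnto_mem_subspace_eq_self y⟩
  have h0 : μH[(Module.finrank ℝ K : ℝ)] (P '' Γ) = 0 := by
    have := hausdorffMeasure_orthogonalProjectionOnto_le K ((Module.finrank ℝ K : ℝ)) Γ (by positivity)
    rw [hfr, hΓ] at this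
    rw [hfr]
    exact le_antisymm this (zero_le)
  obtain ⟨c, hc, hc', hmap⟩ := LinearMap.exists_map_addHaar_eq_smul_addHaar' (P : Euc n →ₗ[ℝ] K)
    (volume : Measure (Euc n)) (μH[(Module.finrank ℝ K : ℝ)] : Measure K) hPs
  have h1 : (volume.map (P : Euc n →ₗ[ℝ] K)) (P '' Γ) = 0 := by
    rw [hmap, Measure.smul_apply, h0, smul_zero]
  have h2 : volume ((P : Euc n → K) ⁻¹' (P '' Γ)) = 0 :=
    Measure.preimage_null_of_map_null P.continuous.measurable.aemeasurable h1
  refine measure_mono_null ?_ h2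
  rintro x ⟨t, ht⟩
  refine ⟨_, ht, ?_⟩
  have : P z = 0 := by
    apply Submodule.orthogonalProjectionOnto_eq_zero_iff.2
    rw [hK]
    exact Submodule.le_orthogonal_orthogonal _ (Submodule.mem_span_singleton_self z)
  simp [this]

lemma s4_haus_null {n : ℕ} {d C₀ : ℝ} (hdn : d < (n : ℝ) - 1)
    (Γ : Set (Euc n)) (hne : Γ.Nonempty)
    (hAR : AhlforsRegular n d C₀ Γ) : μH[(n : ℝ) - 1] Γ = 0 := by
  obtain ⟨a, ha⟩ := hne
  have h : Γ = ⋃ k : ℕ, Γ ∩ ball a ((k : ℝ) + 1) := by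
    rw [← inter_iUnion]
    symm
    rw [inter_eq_left]
    intro x _
    obtain ⟨k, hk⟩ := exists_nat_gt (dist x a)
    exact mem_iUnion.2 ⟨k, by rw [mem_ball]; linarith⟩
  rw [h, measure_iUnion_null_iff]
  intro k
  rcases Measure.hausdorffMeasure_zero_or_top hdn (Γ ∩ ball a ((k : ℝ) + 1)) with h | h
  · exact h
  · have := (hAR a ha ((k : ℝ) + 1) (by positivity)).2
    rw [h] at this
    exact absurd this (by simp)

lemma s4_cont {n : ℕ} (f φ : Euc n → ℝ) (hf : LocallyIntegrable f volume)
    (hφ : ContDiff ℝ (⊤ : ℕ∞) φ) (hc : HasCompactSupport φ) (z : Euc n) :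
    Continuous (fun t : ℝ => ∫ x, f x * φ (x - t • z)) := by
  have hc' : HasCompactSupport (fun y : Euc n => φ (-y)) :=
    hc.comp_homeomorph (Homeomorph.neg _)
  have h := hc'.continuous_convolution_right (ContinuousLinearMap.mul ℝ ℝ) hf
    (hφ.continuous.comp continuous_neg)
  have h2 : Continuous fun t : ℝ => t • z := by fun_prop
  refine (h.comp h2).congr fun t => ?_
  simp [convolution_def]

lemma s4_deriv {n : ℕ} (f φ : Euc n → ℝ) (hf : LocallyIntegrable f volume)
    (hφ : ContDiff ℝ (⊤ : ℕ∞) φ) (hc : HasCompactSupport φ) (z : Euc n) (t : ℝ) :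
    HasDerivAt (fun t : ℝ => ∫ x, f x * φ (x - t • z))
      (-∫ x, f x * fderiv ℝ φ (x - t • z) z) t := by
  have hc' : HasCompactSupport (fun y : Euc n => φ (-y)) :=
    hc.comp_homeomorph (Homeomorph.neg _)
  have hφ' : ContDiff ℝ 1 (fun y : Euc n => φ (-y)) :=
    (hφ.of_le (by exact_mod_cast le_top)).comp contDiff_neg
  have h := hc'.hasFDerivAt_convolution_right (ContinuousLinearMap.mul ℝ ℝ) hf hφ' (t • z)
  have h2 : HasDerivAt (fun t : ℝ => t • z) z t := by
    simpa using (hasDerivAt_id t).smul_const z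
  have h3 := h.comp_hasDerivAt t h2
  have e1 : (fun t : ℝ => ∫ x, f x * φ (x - t • z)) =
      convolution f (fun y => φ (-y)) (ContinuousLinearMap.mul ℝ ℝ) volume ∘ fun t => t • z := by
    funext t
    simp [convolution_def]
  rw [e1]
  refine h3.congr_deriv ?_
  · rw [convolution_precompR_apply _ hf (hc'.fderiv ℝ) (hφ'.continuous_fderiv one_ne_zero)]
    rw [convolution_def, ← integral_neg]
    refine integral_congr_ae (Eventually.of_forall fun x => ?_)
    have : fderiv ℝ (fun y : Euc n => φ (-y)) (t • z - x) z = - fderiv ℝ φ (x - t • z) z := by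
      have h6 : HasFDerivAt φ (fderiv ℝ φ (x - t • z)) (-(t • z - x)) := by
        rw [neg_sub]
        exact (hφ.differentiable (by simp) _).hasFDerivAt
      have h5 := h6.comp (t • z - x) (hasFDerivAt_id (𝕜 := ℝ) (t • z - x)).neg
      have h7 : fderiv ℝ (fun y : Euc n => φ (-y)) (t • z - x) = _ := h5.fderiv
      rw [h7]
      simp
    simp [this]

lemma s4_v_locint {n : ℕ} {d : ℝ} (hdn : d < (n : ℝ) - 1) (Γ : Set (Euc n)) (hne : Γ.Nonempty)
    (hcl : IsClosed Γ) (h0 : volume Γ = 0) (v : Euc n → Euc n)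
    (hv : AEStronglyMeasurable v volume)
    (hL2 : ∫⁻ x in Γᶜ, ENNReal.ofReal (‖v x‖ ^ 2) ∂(measW n d Γ) < ⊤) :
    LocallyIntegrable v volume := by
  have hr : (volume.restrict Γᶜ : Measure (Euc n)) = volume :=
    Measure.restrict_eq_self_of_ae_mem (by rw [ae_iff]; simpa using h0)
  obtain ⟨b, hb⟩ := hne
  intro a
  refine ⟨ball a 1, ball_mem_nhds a one_pos, ?_⟩
  set R : ℝ := dist a b + 1 with hR
  have hRpos : 0 < R := by positivity
  set c : ℝ := R ^ (d + 1 - (n : ℝ)) with hcdef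
  have hcpos : 0 < c := Real.rpow_pos_of_pos hRpos _
  have hwm : Measurable (fun x => ENNReal.ofReal (weightW n d Γ x)) := by
    unfold weightW
    exact ENNReal.measurable_ofReal.comp
      ((continuous_infDist_pt Γ).measurable.pow_const _)
  have hw : ∀ x ∈ ball a 1 ∩ Γᶜ, ENNReal.ofReal c ≤ ENNReal.ofReal (weightW n d Γ x) := by
    rintro x ⟨hx, hxΓ⟩
    apply ENNReal.ofReal_le_ofReal
    unfold weightW
    apply Real.rpow_le_rpow_of_nonpos
    · exact (hcl.notMem_iff_infDist_pos ⟨b, hb⟩).1 hxΓ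
    · refine (infDist_le_dist_of_mem hb).trans ?_
      have := dist_triangle x a b
      rw [mem_ball] at hx
      linarith
    · linarith
  have hsq : ∫⁻ x in ball a 1, ENNReal.ofReal (‖v x‖ ^ 2) < ⊤ := by
    have h1 : ENNReal.ofReal c * ∫⁻ x in ball a 1 ∩ Γᶜ, ENNReal.ofReal (‖v x‖ ^ 2) ≤
        ∫⁻ x in Γᶜ, ENNReal.ofReal (‖v x‖ ^ 2) ∂(measW n d Γ) := by
      unfold measW
      rw [restrict_withDensity hcl.measurableSet.compl,
        lintegral_withDensity_eq_lintegral_mul_non_measurable _ hwm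
          (Eventually.of_forall fun _ => ENNReal.ofReal_lt_top),
        ← lintegral_const_mul' _ _ ENNReal.ofReal_ne_top]
      calc _ ≤ ∫⁻ x in ball a 1 ∩ Γᶜ, ((fun x => ENNReal.ofReal (weightW n d Γ x)) *
              fun x => ENNReal.ofReal (‖v x‖ ^ 2)) x := by
            apply setLIntegral_mono' (measurableSet_ball.inter hcl.measurableSet.compl)
            intro x hx
            exact mul_le_mul_left (hw x hx) _
        _ ≤ _ := lintegral_mono_set inter_subset_right
    have h2 : ∫⁻ x in ball a 1 ∩ Γᶜ, ENNReal.ofReal (‖v x‖ ^ 2) < ⊤ := by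
      by_contra h
      rw [not_lt, top_le_iff] at h
      rw [h, ENNReal.mul_top (by simpa using hcpos)] at h1
      exact absurd (lt_of_le_of_lt h1 hL2) (lt_irrefl _)
    rwa [← Measure.restrict_restrict measurableSet_ball, hr] at h2
  refine ⟨hv.restrict, ?_⟩
  unfold HasFiniteIntegral
  calc ∫⁻ x in ball a 1, ‖v x‖ₑ ≤ ∫⁻ x in ball a 1, (1 + ENNReal.ofReal (‖v x‖ ^ 2)) := by
        apply lintegral_mono
        intro x
        show ‖v x‖ₑ ≤ 1 + ENNReal.ofReal (‖v x‖ ^ 2)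
        rw [← ofReal_norm, ← ENNReal.ofReal_one,
          ← ENNReal.ofReal_add zero_le_one (by positivity)]
        apply ENNReal.ofReal_le_ofReal
        nlinarith [sq_nonneg (‖v x‖ - 1)]
    _ = volume (ball a 1) + ∫⁻ x in ball a 1, ENNReal.ofReal (‖v x‖ ^ 2) := by
        rw [lintegral_add_left measurable_const]; simp
    _ < ⊤ := ENNReal.add_lt_top.2 ⟨measure_ball_lt_top, hsq⟩

lemma s4_shift_le {n : ℕ} {F : Type*} [NormedAddCommGroup F] (g : Euc n → F) (a z : Euc n) (R t : ℝ)
    (ht0 : 0 ≤ t) (ht : t ≤ 1) :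
    ∫⁻ x in ball a R, ‖g (x + t • z)‖ₑ ≤ ∫⁻ x in ball a (R + ‖z‖), ‖g x‖ₑ := by
  have hmp := measurePreserving_add_right (volume : Measure (Euc n)) (t • z)
  have he : MeasurableEmbedding (fun x : Euc n => x + t • z) := measurableEmbedding_addRight _
  calc ∫⁻ x in ball a R, ‖g (x + t • z)‖ₑ
      ≤ ∫⁻ x in (fun x => x + t • z) ⁻¹' ball a (R + ‖z‖), ‖g (x + t • z)‖ₑ := by
        apply lintegral_mono_set
        intro x hx
        rw [mem_preimage, mem_ball, dist_eq_norm]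
        rw [mem_ball, dist_eq_norm] at hx
        have h1 : x + t • z - a = (x - a) + t • z := by abel
        have h2 : ‖t • z‖ ≤ ‖z‖ := by
          rw [norm_smul, Real.norm_of_nonneg ht0]
          exact mul_le_of_le_one_left (norm_nonneg _) ht
        rw [h1]
        linarith [norm_add_le (x - a) (t • z)]
    _ = _ := hmp.setLIntegral_comp_preimage_emb he (fun y => ‖g y‖ₑ) _

lemma s4_loc_fin {n : ℕ} {F : Type*} [NormedAddCommGroup F] (g : Euc n → F)
    (hg : LocallyIntegrable g volume) (a : Euc n) (R : ℝ) :
    ∫⁻ x in ball a R, ‖g x‖ₑ < ⊤ :=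
  ((hg.integrableOn_isCompact (isCompact_closedBall a R)).mono_set ball_subset_closedBall).2

lemma s4_double {n : ℕ} (g : Euc n → ℝ) (hgm : StronglyMeasurable g) (a z : Euc n) (R : ℝ) :
    ∫⁻ x in ball a R, ∫⁻ t in Ioc (0 : ℝ) 1, ‖g (x + t • z)‖ₑ ≤
      ∫⁻ x in ball a (R + ‖z‖), ‖g x‖ₑ := by
  have hm : Measurable (fun p : Euc n × ℝ => ‖g (p.1 + p.2 • z)‖ₑ) :=
    (hgm.measurable.comp (by fun_prop)).enorm
  rw [lintegral_lintegral_swap hm.aemeasurable]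
  calc _ ≤ ∫⁻ t in Ioc (0 : ℝ) 1, ∫⁻ x in ball a (R + ‖z‖), ‖g x‖ₑ := by
        apply setLIntegral_mono' measurableSet_Ioc
        intro t ht
        exact s4_shift_le g a z R t ht.1.le ht.2
    _ = _ := by simp

lemma s4_prod_integrable {n : ℕ} (g : Euc n → ℝ) (hgm : StronglyMeasurable g)
    (hg : LocallyIntegrable g volume) (a z : Euc n) (R : ℝ) :
    Integrable (fun p : Euc n × ℝ => g (p.1 + p.2 • z))
      ((volume.restrict (ball a R)).prod (volume.restrict (Ioc (0 : ℝ) 1))) := by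
  have hm : Measurable (fun p : Euc n × ℝ => g (p.1 + p.2 • z)) :=
    (hgm.measurable.comp (by fun_prop))
  refine ⟨hm.aestronglyMeasurable, ?_⟩
  unfold HasFiniteIntegral
  rw [lintegral_prod _ hm.enorm.aemeasurable]
  exact (s4_double g hgm a z R).trans_lt (s4_loc_fin g hg a _)

lemma s4_swap {n : ℕ} (g φ : Euc n → ℝ) (hgm : StronglyMeasurable g)
    (hg : LocallyIntegrable g volume) (hφ : Continuous φ) (hc : HasCompactSupport φ) (z : Euc n) :
    ∫ s in (0 : ℝ)..1, ∫ x, g x * φ (x - s • z) =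
      ∫ x, φ x * ∫ s in (0 : ℝ)..1, g (x + s • z) := by
  have h1 : ∀ s : ℝ, ∫ x, g x * φ (x - s • z) = ∫ x, φ x * g (x + s • z) := by
    intro s
    rw [← integral_add_right_eq_self _ (s • z)]
    simp [mul_comm]
  have h5 : ∀ x, φ x * ∫ s in (0 : ℝ)..1, g (x + s • z) =
      ∫ s in Ioc (0 : ℝ) 1, φ x * g (x + s • z) := by
    intro x
    rw [intervalIntegral.integral_of_le zero_le_one, integral_const_mul]
  rw [intervalIntegral.integral_of_le zero_le_one,
    integral_congr_ae (Eventually.of_forall h1), integral_congr_ae (Eventually.of_forall h5)]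
  symm
  apply integral_integral_swap
  obtain ⟨R, hR⟩ := hc.isBounded.subset_ball (0 : Euc n)
  have h2 := s4_prod_integrable g hgm hg 0 z R
  obtain ⟨M, hM⟩ := hφ.bounded_above_of_compact_support hc
  have h3 : Integrable (fun p : Euc n × ℝ => φ p.1 * g (p.1 + p.2 • z))
      ((volume.restrict (ball 0 R)).prod (volume.restrict (Ioc (0 : ℝ) 1))) :=
    h2.bdd_mul (c := M) (hφ.comp continuous_fst).aestronglyMeasurable
      (Eventually.of_forall fun p => hM p.1)
  have h4 : ((volume.restrict (ball (0 : Euc n) R)).prod (volume.restrict (Ioc (0 : ℝ) 1))) =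
      ((volume : Measure (Euc n)).prod (volume.restrict (Ioc (0 : ℝ) 1))).restrict
        (ball 0 R ×ˢ univ) := by
    rw [← Measure.prod_restrict, Measure.restrict_univ]
  rw [h4] at h3
  refine (integrableOn_iff_integrable_of_support_subset ?_).1 h3
  intro p hp
  refine ⟨hR (subset_tsupport _ ?_), mem_univ _⟩
  intro h0
  apply hp
  show φ p.1 * g (p.1 + p.2 • z) = 0
  rw [h0, zero_mul]

lemma s4_T {n : ℕ} (f g φ : Euc n → ℝ) (hf : LocallyIntegrable f volume)
    (hg : LocallyIntegrable g volume)
    (hφ : ContDiff ℝ (⊤ : ℕ∞) φ) (hc : HasCompactSupport φ) (z : Euc n)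
    (h : ∀ s ∈ Icc (0 : ℝ) 1, ∫ x, f x * fderiv ℝ φ (x - s • z) z = - ∫ x, g x * φ (x - s • z)) :
    (∫ x, f x * φ (x - z)) - ∫ x, f x * φ x = ∫ s in (0 : ℝ)..1, ∫ x, g x * φ (x - s • z) := by
  have h1 := intervalIntegral.integral_eq_sub_of_hasDerivAt (a := 0) (b := 1)
    (f := fun t : ℝ => ∫ x, f x * φ (x - t • z)) (f' := fun s => ∫ x, g x * φ (x - s • z))
    (fun s hs => by
      rw [uIcc_of_le zero_le_one] at hs
      have := s4_deriv f φ hf hφ hc z s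
      rwa [h s hs, neg_neg] at this)
    ((s4_cont g φ hg hφ hc z).intervalIntegrable _ _)
  rw [h1]
  simp

lemma s4_L {n : ℕ} (Γ : Set (Euc n)) (hcl : IsClosed Γ) (z : Euc n)
    (hnull : volume {x : Euc n | ∃ t ∈ Icc (0 : ℝ) 1, x + t • z ∈ Γ} = 0)
    (u g : Euc n → ℝ) (hu : LocallyIntegrableOn u Γᶜ volume)
    (hgm : StronglyMeasurable g) (hg : LocallyIntegrable g volume)
    (hgrad : ∀ φ : Euc n → ℝ, ContDiff ℝ (⊤ : ℕ∞) φ → HasCompactSupport φ → tsupport φ ⊆ Γᶜ →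
      ∫ x, u x * fderiv ℝ φ x z = - ∫ x, g x * φ x) :
    ∀ᵐ x : Euc n, u (x + z) - u x = ∫ s in (0 : ℝ)..1, g (x + s • z) := by
  set N : Set (Euc n) := {x : Euc n | ∃ t ∈ Icc (0 : ℝ) 1, x + t • z ∈ Γ} with hN
  have hNcl : IsClosed N := by
    have h1 : IsCompact ((fun t : ℝ => -(t • z)) '' Icc (0 : ℝ) 1) :=
      isCompact_Icc.image (by fun_prop)
    have h2 := hcl.add_right_of_isCompact h1
    convert h2 using 1
    ext x
    rw [Set.mem_add]
    constructor
    · rintro ⟨t, ht, hx⟩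
      exact ⟨_, hx, _, ⟨t, ht, rfl⟩, by simp⟩
    · rintro ⟨y, hy, _, ⟨t, ht, rfl⟩, rfl⟩
      exact ⟨t, ht, by simpa using hy⟩
  have hU : IsOpen Nᶜ := hNcl.isOpen_compl
  have hloc1 : LocallyIntegrableOn u Nᶜ volume := by
    refine hu.mono_set ?_
    intro x hx hxΓ
    exact hx ⟨0, by simp, by simpa using hxΓ⟩
  have hloc2 : LocallyIntegrableOn (fun x => u (x + z)) Nᶜ volume := by
    rw [locallyIntegrableOn_iff hU.isLocallyClosed]
    intro K hK hKc
    have hK2 : IsCompact ((fun x => x + z) '' K) := hKc.image (by fun_prop)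
    have h1 : IntegrableOn u ((fun x => x + z) '' K) volume := by
      refine hu.integrableOn_compact_subset ?_ hK2
      rintro _ ⟨x, hx, rfl⟩ hxΓ
      exact hK hx ⟨1, by simp, by simpa using hxΓ⟩
    have := ((measurePreserving_add_right (volume : Measure (Euc n)) z).integrableOn_comp_preimage
      (measurableEmbedding_addRight z)).2 h1
    rwa [preimage_image_eq _ (add_left_injective z)] at this
  have hloc3 : LocallyIntegrableOn (fun x => ∫ s in (0 : ℝ)..1, g (x + s • z)) Nᶜ volume := by
    rw [locallyIntegrableOn_iff hU.isLocallyClosed]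
    intro K hK hKc
    obtain ⟨R, hR⟩ := hKc.isBounded.subset_ball (0 : Euc n)
    have := (s4_prod_integrable g hgm hg 0 z R).integral_prod_left
    simp_rw [intervalIntegral.integral_of_le zero_le_one]
    exact IntegrableOn.mono_set this hR
  have key := hU.ae_eq_zero_of_integral_contDiff_smul_eq_zero
    (f := fun x => u (x + z) - u x - ∫ s in (0 : ℝ)..1, g (x + s • z))
    ((hloc2.sub hloc1).sub hloc3) ?_
  · have : ∀ᵐ x : Euc n, x ∈ Nᶜ := by rw [ae_iff]; simpa using hnull
    filter_upwards [key, this] with x h1 h2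
    exact sub_eq_zero.1 (h1 h2)
  intro φ hφ hc hsupp
  have hint : ∀ f : Euc n → ℝ, LocallyIntegrableOn f Nᶜ volume →
      Integrable (fun x => φ x * f x) := by
    intro f hf
    have h1 : IntegrableOn f (tsupport φ) volume := hf.integrableOn_compact_subset hsupp hc
    have h2 : IntegrableOn (fun x => φ x * f x) (tsupport φ) volume :=
      h1.continuousOn_mul hφ.continuous.continuousOn hc
    refine (integrableOn_iff_integrable_of_support_subset ?_).1 h2
    intro x hx
    apply subset_tsupport
    intro h0
    apply hx
    simp [h0]
  set S : Set (Euc n) := (fun p : Euc n × ℝ => p.1 + p.2 • z) '' (tsupport φ ×ˢ Icc (0 : ℝ) 1)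
    with hS
  have hSc : IsCompact S := (IsCompact.prod hc isCompact_Icc).image (by fun_prop)
  have hSsub : S ⊆ Γᶜ := by
    rintro _ ⟨⟨x, t⟩, ⟨hx, ht⟩, rfl⟩ hxΓ
    exact hsupp hx ⟨t, ht, hxΓ⟩
  have hSmem : ∀ x s, s ∈ Icc (0 : ℝ) 1 → x - s • z ∈ tsupport φ → x ∈ S := by
    intro x s hs hx
    exact ⟨(x - s • z, s), ⟨hx, hs⟩, by simp⟩
  set f : Euc n → ℝ := S.indicator u with hf
  have hfint : LocallyIntegrable f volume := by
    have : IntegrableOn u S volume := hu.integrableOn_compact_subset hSsub hSc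
    exact (this.integrable_indicator hSc.measurableSet).locallyIntegrable
  have hTs := s4_T f g φ hfint hg hφ hc z ?_
  · rw [s4_swap g φ hgm hg hφ.continuous hc z] at hTs
    have e1 : ∫ x, f x * φ (x - z) = ∫ x, φ x * u (x + z) := by
      rw [← integral_add_right_eq_self _ z]
      refine integral_congr_ae (Eventually.of_forall fun x => ?_)
      show f (x + z) * φ (x + z - z) = φ x * u (x + z)
      rw [add_sub_cancel_right]
      by_cases hx : x ∈ tsupport φ
      · have : x + z ∈ S := hSmem _ 1 (by simp) (by simpa using hx)
        rw [hf, indicator_of_mem this, mul_comm]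
      · rw [image_eq_zero_of_notMem_tsupport hx]; simp
    have e2 : ∫ x, f x * φ x = ∫ x, φ x * u x := by
      refine integral_congr_ae (Eventually.of_forall fun x => ?_)
      show f x * φ x = φ x * u x
      by_cases hx : x ∈ tsupport φ
      · have : x ∈ S := hSmem _ 0 (by simp) (by simpa using hx)
        rw [hf, indicator_of_mem this, mul_comm]
      · rw [image_eq_zero_of_notMem_tsupport hx]; simp
    rw [e1, e2] at hTs
    simp_rw [smul_eq_mul, mul_sub]
    have i1 := hint _ hloc1
    have i2 := hint _ hloc2
    have i3 := hint _ hloc3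
    have i4 : Integrable (fun x => φ x * u (x + z) - φ x * u x) := i2.sub i1
    rw [integral_sub i4 i3, integral_sub i2 i1, hTs, sub_self]
  · intro s hs
    set ψ : Euc n → ℝ := fun x => φ (x - s • z) with hψ
    have hψd : ContDiff ℝ (⊤ : ℕ∞) ψ := hφ.comp (contDiff_id.sub contDiff_const)
    have hψc : HasCompactSupport ψ := hc.comp_homeomorph (Homeomorph.subRight (s • z))
    have hψs : tsupport ψ ⊆ S := by
      refine closure_minimal ?_ hSc.isClosed
      intro x hx
      exact hSmem x s hs (subset_tsupport _ hx)
    have h1 := hgrad ψ hψd hψc (hψs.trans hSsub)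
    rw [← h1]
    refine integral_congr_ae (Eventually.of_forall fun x => ?_)
    show f x * fderiv ℝ φ (x - s • z) z = u x * fderiv ℝ ψ x z
    have h2 : fderiv ℝ ψ x = fderiv ℝ φ (x - s • z) := fderiv_comp_sub (s • z)
    by_cases hx : x ∈ S
    · rw [hf, indicator_of_mem hx, h2]
    · rw [← h2, fderiv_of_notMem_tsupport ℝ (fun h => hx (hψs h))]
      simp

lemma s4_u_locint {n : ℕ} (u : Euc n → ℝ) (v : Euc n → Euc n) (hum : StronglyMeasurable u)
    (hvm : StronglyMeasurable v) (hv : LocallyIntegrable v volume)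
    (hL : ∀ z : Euc n, ∀ᵐ x : Euc n,
      u (x + z) - u x = ∫ s in (0 : ℝ)..1, inner ℝ z (v (x + s • z))) :
    LocallyIntegrable u volume := by
  intro a
  refine ⟨ball a 1, ball_mem_nhds a one_pos, ?_⟩
  set A : ℝ≥0∞ := ∫⁻ x in ball a 3, ‖v x‖ₑ with hA
  have hAfin : A < ⊤ := s4_loc_fin v hv a 3
  have h1 : ∀ z ∈ ball (0 : Euc n) 2, ∫⁻ x in ball a 1, ‖u (x + z) - u x‖ₑ ≤ 2 * A := by
    intro z hz
    have hz' : ‖z‖ < 2 := by simpa using hz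
    have hgm : StronglyMeasurable (fun x => inner ℝ z (v x)) := by
      exact stronglyMeasurable_const.inner hvm
    calc ∫⁻ x in ball a 1, ‖u (x + z) - u x‖ₑ
        ≤ ∫⁻ x in ball a 1, ∫⁻ t in Ioc (0 : ℝ) 1, ‖inner ℝ z (v (x + t • z))‖ₑ := by
          apply lintegral_mono_ae
          filter_upwards [ae_restrict_of_ae (hL z)] with x hx
          rw [hx, intervalIntegral.integral_of_le zero_le_one]
          exact enorm_integral_le_lintegral_enorm _
      _ ≤ ∫⁻ x in ball a (1 + ‖z‖), ‖inner ℝ z (v x)‖ₑ := s4_double _ hgm a z 1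
      _ ≤ ∫⁻ x in ball a 3, ‖inner ℝ z (v x)‖ₑ :=
          lintegral_mono_set (ball_subset_ball (by linarith))
      _ ≤ ∫⁻ x in ball a 3, 2 * ‖v x‖ₑ := by
          apply lintegral_mono
          intro x
          show ‖inner ℝ z (v x)‖ₑ ≤ 2 * ‖v x‖ₑ
          have : ‖inner ℝ z (v x)‖ ≤ 2 * ‖v x‖ :=
            (norm_inner_le_norm z (v x)).trans (by gcongr)
          have h9 := ENNReal.ofReal_le_ofReal this
          rw [ENNReal.ofReal_mul (by norm_num), ofReal_norm, ofReal_norm,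
            ENNReal.ofReal_ofNat] at h9
          exact h9
      _ = 2 * A := lintegral_const_mul' _ _ (by simp)
  have hm : Measurable (fun p : Euc n × Euc n => ‖u (p.2 + p.1) - u p.2‖ₑ) :=
    ((hum.measurable.comp (by fun_prop)).sub (hum.measurable.comp measurable_snd)).enorm
  have h2 : ∫⁻ x in ball a 1, ∫⁻ z in ball (0 : Euc n) 2, ‖u (x + z) - u x‖ₑ < ⊤ := by
    rw [← lintegral_lintegral_swap (f := fun z x => ‖u (x + z) - u x‖ₑ) hm.aemeasurable]
    calc _ ≤ ∫⁻ z in ball (0 : Euc n) 2, 2 * A := setLIntegral_mono' measurableSet_ball h1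
      _ = 2 * A * volume (ball (0 : Euc n) 2) := by simp
      _ < ⊤ := ENNReal.mul_lt_top (ENNReal.mul_lt_top (by simp) hAfin) measure_ball_lt_top
  have hm2 : Measurable (fun x : Euc n => ∫⁻ z in ball (0 : Euc n) 2, ‖u (x + z) - u x‖ₑ) := by
    exact (hm.comp measurable_swap).lintegral_prod_right'
  have h3 := ae_lt_top hm2 h2.ne
  have hpos : volume (ball a 1) ≠ 0 := (measure_ball_pos _ _ one_pos).ne'
  obtain ⟨x, hx, hfin⟩ : ∃ x ∈ ball a 1,
      ∫⁻ z in ball (0 : Euc n) 2, ‖u (x + z) - u x‖ₑ < ⊤ := by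
    by_contra! hcon
    apply hpos
    rw [ae_restrict_iff' measurableSet_ball] at h3
    refine measure_mono_null ?_ (ae_iff.1 h3)
    intro y hy hlt
    exact absurd (hlt hy) (not_lt.2 (hcon y hy))
  have h4 : ∫⁻ y in ball a 1, ‖u y - u x‖ₑ < ⊤ := by
    refine lt_of_le_of_lt ?_ hfin
    have hmp := measurePreserving_add_left (volume : Measure (Euc n)) x
    have he : MeasurableEmbedding (fun y : Euc n => x + y) := measurableEmbedding_addLeft _
    rw [← hmp.setLIntegral_comp_preimage_emb he (fun y => ‖u y - u x‖ₑ)]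
    apply lintegral_mono_set
    intro y hy
    rw [mem_preimage, mem_ball, dist_eq_norm] at hy
    rw [mem_ball, dist_eq_norm] at hx ⊢
    have : y - 0 = (x + y - a) - (x - a) := by abel
    rw [this]
    linarith [norm_sub_le (x + y - a) (x - a)]
  have h5 : IntegrableOn (fun y => u y - u x) (ball a 1) volume :=
    ⟨(hum.sub stronglyMeasurable_const).aestronglyMeasurable, h4⟩
  have h6 : IntegrableOn (fun y => (u y - u x) + u x) (ball a 1) volume :=
    Integrable.add h5 (integrableOn_const (measure_ball_lt_top.ne))
  simpa using h6

lemma s4_global {n : ℕ} (u g φ : Euc n → ℝ) (e : Euc n)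
    (hu : LocallyIntegrable u volume)
    (hgm : StronglyMeasurable g) (hg : LocallyIntegrable g volume)
    (hφ : ContDiff ℝ (⊤ : ℕ∞) φ) (hc : HasCompactSupport φ)
    (hL : ∀ h : ℝ, ∀ᵐ x : Euc n,
      u (x + h • e) - u x = ∫ s in (0 : ℝ)..1, h * g (x + s • (h • e))) :
    ∫ x, u x * fderiv ℝ φ x e = - ∫ x, g x * φ x := by
  set G : ℝ → ℝ := fun t => ∫ x, u x * φ (x - t • e) with hG
  set K : ℝ → ℝ := fun t => ∫ x, g x * φ (x - t • e) with hK
  have hKc : Continuous K := s4_cont g φ hg hφ hc e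
  have h1 : HasDerivAt G (-∫ x, u x * fderiv ℝ φ x e) 0 := by
    simpa using s4_deriv u φ hu hφ hc e 0
  have hGK : ∀ h, G h = G 0 + ∫ s in (0 : ℝ)..h, K s := by
    intro h
    have a1 : G h = ∫ x, φ x * u (x + h • e) := by
      rw [hG]
      simp only
      rw [← integral_add_right_eq_self _ (h • e)]
      simp [mul_comm]
    have a2 : G 0 = ∫ x, φ x * u x := by simp [hG, mul_comm]
    have a3 : ∫ s in (0 : ℝ)..h, K s = ∫ x, φ x * (u (x + h • e) - u x) := by
      have b1 : ∫ s in (0 : ℝ)..h, K s = h * ∫ s in (0 : ℝ)..1, K (s * h) := by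
        rw [intervalIntegral.mul_integral_comp_mul_right]
        simp
      have b2 : ∫ s in (0 : ℝ)..1, K (s * h) = ∫ s in (0 : ℝ)..1,
          ∫ x, g x * φ (x - s • (h • e)) := by
        simp [hK, smul_smul]
      rw [b1, b2, s4_swap g φ hgm hg hφ.continuous hc (h • e), ← integral_const_mul]
      refine integral_congr_ae ?_
      filter_upwards [hL h] with x hx
      rw [hx, intervalIntegral.integral_const_mul]
      ring
    have hu2 : LocallyIntegrable (fun x => u (x + h • e)) volume := by
      have := (measurePreserving_add_right (volume : Measure (Euc n)) (h • e))
      intro x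
      have h8 : IntegrableAtFilter u (𝓝 (x + h • e)) volume := hu _
      obtain ⟨s, hs, hsi⟩ := h8
      refine ⟨(fun y => y + h • e) ⁻¹' s, ?_, ?_⟩
      · exact (continuous_add_const (h • e)).continuousAt.preimage_mem_nhds hs
      · exact (this.integrableOn_comp_preimage (measurableEmbedding_addRight _)).2 hsi
    have i1 : Integrable (fun x => φ x * u x) :=
      hu.integrable_smul_left_of_hasCompactSupport hφ.continuous hc
    have i2 : Integrable (fun x => φ x * u (x + h • e)) :=
      hu2.integrable_smul_left_of_hasCompactSupport hφ.continuous hc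
    have i3 : Integrable (fun x => φ x * (u (x + h • e) - u x)) :=
      (i2.sub i1).congr (Eventually.of_forall fun x => by simp [mul_sub])
    rw [a1, a2, a3, ← integral_add i1 i3]
    refine integral_congr_ae (Eventually.of_forall fun x => ?_)
    simp only
    ring
  have h2 : HasDerivAt G (K 0) 0 := by
    have h3 : HasDerivAt (fun h => ∫ s in (0 : ℝ)..h, K s) (K 0) 0 :=
      intervalIntegral.integral_hasDerivAt_right (hKc.intervalIntegrable _ _)
        hKc.stronglyMeasurable.stronglyMeasurableAtFilter hKc.continuousAt
    exact (h3.const_add (G 0)).congr_of_eventuallyEq (Eventually.of_forall hGK)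
  have h4 := h1.unique h2
  have h5 : K 0 = ∫ x, g x * φ x := by simp [hK]
  rw [h5] at h4
  linarith

lemma s4_grad_cont {n : ℕ} {φ : Euc n → ℝ} (hφ : ContDiff ℝ (⊤ : ℕ∞) φ) :
    Continuous (gradient φ) := by
  have h1 : Continuous (fderiv ℝ φ) := hφ.continuous_fderiv (by simp)
  exact (InnerProductSpace.toDual ℝ (Euc n)).symm.continuous.comp h1

lemma s4_grad_zero {n : ℕ} {φ : Euc n → ℝ} {x : Euc n} (hx : x ∉ tsupport φ) :
    gradient φ x = 0 := by
  unfold gradient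
  rw [fderiv_of_notMem_tsupport ℝ hx, map_zero]

lemma s4_int_grad {n : ℕ} {φ : Euc n → ℝ} (hφ : ContDiff ℝ (⊤ : ℕ∞) φ)
    (hc : HasCompactSupport φ) (u : Euc n → ℝ) (hu : IntegrableOn u (tsupport φ) volume) :
    Integrable (fun x => u x • gradient φ x) := by
  have h2 : IntegrableOn (fun x => u x • gradient φ x) (tsupport φ) volume :=
    hu.smul_continuousOn (s4_grad_cont hφ).continuousOn hc
  refine (integrableOn_iff_integrable_of_support_subset ?_).1 h2
  intro x hx
  by_contra h
  apply hx
  simp [s4_grad_zero h]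

lemma s4_iff {n : ℕ} {φ : Euc n → ℝ} (u : Euc n → ℝ) (v : Euc n → Euc n)
    (h1 : Integrable (fun x => u x • gradient φ x)) (h2 : Integrable (fun x => φ x • v x)) :
    (∫ x, u x • gradient φ x = -∫ x, φ x • v x) ↔
      ∀ z : Euc n, ∫ x, u x * fderiv ℝ φ x z = -∫ x, inner ℝ z (v x) * φ x := by
  have e1 : ∀ z : Euc n, ∫ x, u x * fderiv ℝ φ x z = inner ℝ z (∫ x, u x • gradient φ x) := by
    intro z
    rw [← integral_inner h1]
    refine integral_congr_ae (Eventually.of_forall fun x => ?_)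
    simp only [inner_smul_right, inner_gradient_right]
    simp
  have e2 : ∀ z : Euc n, -∫ x, inner ℝ z (v x) * φ x = inner ℝ z (-∫ x, φ x • v x) := by
    intro z
    rw [inner_neg_right, ← integral_inner h2]
    congr 1
    refine integral_congr_ae (Eventually.of_forall fun x => ?_)
    simp only [inner_smul_right]
    ring
  constructor
  · intro h z
    rw [e1, e2, h]
  · intro h
    refine ext_inner_left ℝ fun z => ?_
    rw [← e1, ← e2, h]

/-- functions of `W` are locally integrable on `ℝⁿ` and their
distributional gradient on `Ω` extends to a distributional gradient on all of `ℝⁿ`. -/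
theorem statement4 (n : ℕ) (hn : 2 ≤ n) (d C₀ : ℝ) (hd0 : 0 < d)
    (hdn : d < (n : ℝ) - 1) (hC₀ : 1 ≤ C₀)
    (Γ : Set (Euc n)) (hne : Γ.Nonempty) (hcl : IsClosed Γ)
    (hAR : AhlforsRegular n d C₀ Γ)
    (u : Euc n → ℝ) (v : Euc n → Euc n)
    (hu : LocallyIntegrableOn u Γᶜ volume)
    (hv : LocallyIntegrableOn v Γᶜ volume)
    (hgrad : IsDistribGradOn u v Γᶜ)
    (hL2 : ∫⁻ x in Γᶜ, ENNReal.ofReal (‖v x‖ ^ 2) ∂(measW n d Γ) < ⊤) :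
    LocallyIntegrable u volume ∧
      ∃ v' : Euc n → Euc n, LocallyIntegrable v' volume ∧
        IsDistribGradOn u v' univ ∧
        (∀ᵐ x ∂(volume.restrict Γᶜ), v' x = v x) ∧
        ∫⁻ x, ENNReal.ofReal (‖v' x‖ ^ 2) ∂(measW n d Γ) < ⊤ := by
  have hΓ := s4_haus_null hdn Γ hne hAR
  obtain ⟨z0, hz0⟩ : ∃ z0 : Euc n, z0 ≠ 0 := by
    refine ⟨EuclideanSpace.single (⟨0, by omega⟩ : Fin n) 1, ?_⟩
    intro h
    have := congrArg norm h
    simp at this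
  have h0 : volume Γ = 0 := by
    refine measure_mono_null ?_ (s4_shadow_null Γ hΓ z0 hz0)
    intro x hx
    exact ⟨0, by simpa using hx⟩
  have hnull : ∀ z : Euc n, volume {x : Euc n | ∃ t ∈ Icc (0 : ℝ) 1, x + t • z ∈ Γ} = 0 := by
    intro z
    by_cases hz : z = 0
    · refine measure_mono_null ?_ h0
      rintro x ⟨t, _, hx⟩
      simpa [hz] using hx
    · refine measure_mono_null ?_ (s4_shadow_null Γ hΓ z hz)
      rintro x ⟨t, _, hx⟩
      exact ⟨t, hx⟩
  have hr : (volume.restrict Γᶜ : Measure (Euc n)) = volume :=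
    Measure.restrict_eq_self_of_ae_mem (by rw [ae_iff]; simpa using h0)
  have hum : AEStronglyMeasurable u volume := by
    have := hu.aestronglyMeasurable
    rwa [hr] at this
  have hvm : AEStronglyMeasurable v volume := by
    have := hv.aestronglyMeasurable
    rwa [hr] at this
  have hvl : LocallyIntegrable v volume := s4_v_locint hdn Γ hne hcl h0 v hvm hL2
  obtain ⟨u1, hu1m, hu1⟩ := hum
  obtain ⟨v1, hv1m, hv1⟩ := hvm
  have hv1l : LocallyIntegrable v1 volume := by
    intro x
    obtain ⟨s, hs, hi⟩ := hvl x
    exact ⟨s, hs, hi.congr (ae_restrict_of_ae hv1)⟩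
  have hu1l : LocallyIntegrableOn u1 Γᶜ volume := by
    intro x hx
    obtain ⟨s, hs, hi⟩ := hu x hx
    exact ⟨s, hs, hi.congr (ae_restrict_of_ae hu1)⟩
  have hgm : ∀ z : Euc n, StronglyMeasurable (fun x => inner ℝ z (v1 x)) := fun z =>
    stronglyMeasurable_const.inner hv1m
  have hgl : ∀ z : Euc n, LocallyIntegrable (fun x => inner ℝ z (v1 x)) volume := by
    intro z x
    obtain ⟨s, hs, hi⟩ := hv1l x
    exact ⟨s, hs, hi.const_inner z⟩
  have hL : ∀ z : Euc n, ∀ᵐ x : Euc n,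
      u1 (x + z) - u1 x = ∫ s in (0 : ℝ)..1, inner ℝ z (v1 (x + s • z)) := by
    intro z
    refine s4_L Γ hcl z (hnull z) u1 (fun x => inner ℝ z (v1 x)) hu1l (hgm z) (hgl z) ?_
    intro φ hφ hc hs
    have h1 := hgrad φ hφ hc hs
    rw [hr] at h1
    have h2 : ∫ x, u1 x • gradient φ x = -∫ x, φ x • v1 x := by
      have e1 : ∫ x, u x • gradient φ x = ∫ x, u1 x • gradient φ x := by
        refine integral_congr_ae ?_
        filter_upwards [hu1] with x hx
        rw [hx]
      have e2 : ∫ x, φ x • v x = ∫ x, φ x • v1 x := by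
        refine integral_congr_ae ?_
        filter_upwards [hv1] with x hx
        rw [hx]
      rw [← e1, ← e2, h1]
    exact (s4_iff u1 v1
      (s4_int_grad hφ hc u1 (hu1l.integrableOn_compact_subset hs hc))
      (hv1l.integrable_smul_left_of_hasCompactSupport hφ.continuous hc)).1 h2 z
  have hu1L : LocallyIntegrable u1 volume := s4_u_locint u1 v1 hu1m hv1m hv1l hL
  have huL : LocallyIntegrable u volume := by
    intro x
    obtain ⟨s, hs, hi⟩ := hu1L x
    exact ⟨s, hs, hi.congr (ae_restrict_of_ae hu1.symm)⟩
  refine ⟨huL, v, hvl, ?_, Eventually.of_forall fun _ => rfl, ?_⟩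
  · intro φ hφ hc _
    rw [Measure.restrict_univ]
    have e1 : ∫ x, u x • gradient φ x = ∫ x, u1 x • gradient φ x := by
      refine integral_congr_ae ?_
      filter_upwards [hu1] with x hx
      rw [hx]
    have e2 : ∫ x, φ x • v x = ∫ x, φ x • v1 x := by
      refine integral_congr_ae ?_
      filter_upwards [hv1] with x hx
      rw [hx]
    rw [e1, e2]
    refine (s4_iff u1 v1
      (s4_int_grad hφ hc u1 (hu1L.integrableOn_isCompact hc))
      (hv1l.integrable_smul_left_of_hasCompactSupport hφ.continuous hc)).2 fun e => ?_
    refine s4_global u1 (fun x => inner ℝ e (v1 x)) φ e hu1L (hgm e) (hgl e) hφ hc fun h => ?_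
    filter_upwards [hL (h • e)] with x hx
    rw [hx]
    simp only [real_inner_smul_left]
  · have hac : measW n d Γ Γ = 0 := withDensity_absolutelyContinuous _ _ h0
    have hr2 : (measW n d Γ).restrict Γᶜ = measW n d Γ :=
      Measure.restrict_eq_self_of_ae_mem (by rw [ae_iff]; simpa using hac)
    rwa [hr2] at hL2
end
end
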